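/- arXiv:1907.04705 — 3 statements merged into one kernel-verified Lean document; each statement's English description precedes it below -/
import Mathlib

section
/- (Casimir conditions, 2-dimensional spatial domain.) Consider the closed loop of the plant $\dot{x}^\alpha = (\mathcal{J}^{\alpha\beta}-\mathcal{R}^{\alpha\beta})\delta_\beta\mathcal{H}[x] + \mathcal{G}^\alpha_\xi u^\xi$, $y_\xi = \mathcal{G}^\alpha_\xi\delta_\alpha\mathcal{H}[x]$ on the rectangle $B=[0,L_1]\times[0,L_2]$ (smooth data, $\alpha,\beta=1,\dots,n$, $\xi=1,\dots,l$) and the controller $\dot{x}_c^{\alpha_c} = (J_c^{\alpha_c\beta_c}-R_c^{\alpha_c\beta_c})\partial_{\beta_c}H_c(x_c) + G^{\alpha_c}_{c,\xi}u_c^\xi$, $y_{c,\xi} = G^{\beta_c}_{c,\xi}\partial_{\beta_c}H_c(x_c)$ ($J_c, R_c, G_c$ constant matrices), interconnected by $u_c^\xi = K^{\xi\eta}\iint_B y_\eta\,dz^1dz^2$, $u^\xi = -K^{\xi\eta}y_{c,\eta}$ with a constant matrix $K$. Fix $\lambda \in \{1,\dots,n_c\}$ and let $\mathcal{C}$ be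 a smooth second-order density. Assume, for all $t$ and all $(z^1,z^2)\in B$: (a) $J_c^{\lambda\beta_c}-R_c^{\lambda\beta_c} = 0$ for all $\beta_c$; (b) $\delta_\alpha\mathcal{C}[x]\,(\mathcal{J}^{\alpha\beta}-\mathcal{R}^{\alpha\beta}) + G^{\lambda}_{c,\xi}K^{\xi\eta}\mathcal{G}^\beta_\eta = 0$ for all $\beta$; (c) $\delta_\alpha\mathcal{C}[x]\,\mathcal{G}^\alpha_\xi K^{\xi\eta}G^{\alpha_c}_{c,\eta} = 0$ for all $\alpha_c$; (d) along the solution the boundary contributions of $\mathcal{C}$ vanish: on the edges $z^1\in\{0,L_1\}$, $\dot{x}^\alpha(\mathcal{C}^{[10]}_\alpha - \partial_1\mathcal{C}^{[20]}_\alpha - \partial_2\mathcal{C}^{[11]}_\alpha) + \dot{x}^\alpha_{[10]}\mathcal{C}^{[20]}_\alpha = 0$; on the edges $z^2\in\{0,L_2\}$, $\dot{x}^\alpha(\mathcal{C}^{[01]}_\alpha - \partial_2\mathcal{C}^{[02]}_\alpha - \partial_1\mathcal{C}^{[11]}_\alpha) + \dot{x}^\alpha_{[01]}\mathcal{C}^{[02]}_\alpha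 = 0$; and $\dot{x}^\alpha\mathcal{C}^{[11]}_\alpha = 0$ at the four corners. Then the functional $\mathscr{C}(t) = x_c^\lambda(t) + \iint_B\mathcal{C}[x](t,\cdot)\,dz^1dz^2$ is constant in $t$ along the closed-loop solution, i.e. it is a structural invariant (Casimir functional) of the closed loop. -/
open MeasureTheory

/-- The jet space `(z¹, z², x, x_[10], x_[01], x_[20], x_[11], x_[02])`. -/
abbrev Jet2 (n : ℕ) :=
  ℝ × ℝ × (Fin n → ℝ) × (Fin n → ℝ) × (Fin n → ℝ) × (Fin n → ℝ) × (Fin n → ℝ) × (Fin n → ℝ)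

/-- Time derivative of a field `f(t,z¹,z²)`. -/
noncomputable def pt2 {E : Type*} [NormedAddCommGroup E] [NormedSpace ℝ E]
    (f : ℝ → ℝ → ℝ → E) : ℝ → ℝ → ℝ → E := fun t a b => deriv (fun s => f s a b) t

/-- Derivative `∂₁` with respect to `z¹`. -/
noncomputable def dz1 {E : Type*} [NormedAddCommGroup E] [NormedSpace ℝ E]
    (f : ℝ → ℝ → ℝ → E) : ℝ → ℝ → ℝ → E := fun t a b => deriv (fun s => f t s b) a

/-- Derivative `∂₂` with respect to `z²`. -/
noncomputable def dz2 {E : Type*} [NormedAddCommGroup E] [NormedSpace ℝ E]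
    (f : ℝ → ℝ → ℝ → E) : ℝ → ℝ → ℝ → E := fun t a b => deriv (fun s => f t a s) b

/-- Second-order jet of the field `x` at `(t, z¹, z²)`. -/
noncomputable def jet2 {n : ℕ} (x : ℝ → ℝ → ℝ → Fin n → ℝ) (t a b : ℝ) : Jet2 n :=
  (a, b, x t a b, dz1 x t a b, dz2 x t a b,
    dz1 (dz1 x) t a b, dz1 (dz2 x) t a b, dz2 (dz2 x) t a b)

/-- Composed partial derivative `(∂H/∂x^α)[x]`. -/
noncomputable def sl00 {n : ℕ} (H : Jet2 n → ℝ) (x : ℝ → ℝ → ℝ → Fin n → ℝ)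
    (α : Fin n) : ℝ → ℝ → ℝ → ℝ :=
  fun t a b => fderiv ℝ H (jet2 x t a b) (0, 0, Pi.single α 1, 0, 0, 0, 0, 0)

/-- Composed partial derivative `(∂H/∂x^α_[10])[x]`. -/
noncomputable def sl10 {n : ℕ} (H : Jet2 n → ℝ) (x : ℝ → ℝ → ℝ → Fin n → ℝ)
    (α : Fin n) : ℝ → ℝ → ℝ → ℝ :=
  fun t a b => fderiv ℝ H (jet2 x t a b) (0, 0, 0, Pi.single α 1, 0, 0, 0, 0)

/-- Composed partial derivative `(∂H/∂x^α_[01])[x]`. -/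
noncomputable def sl01 {n : ℕ} (H : Jet2 n → ℝ) (x : ℝ → ℝ → ℝ → Fin n → ℝ)
    (α : Fin n) : ℝ → ℝ → ℝ → ℝ :=
  fun t a b => fderiv ℝ H (jet2 x t a b) (0, 0, 0, 0, Pi.single α 1, 0, 0, 0)

/-- Composed partial derivative `(∂H/∂x^α_[20])[x]`. -/
noncomputable def sl20 {n : ℕ} (H : Jet2 n → ℝ) (x : ℝ → ℝ → ℝ → Fin n → ℝ)
    (α : Fin n) : ℝ → ℝ → ℝ → ℝ :=
  fun t a b => fderiv ℝ H (jet2 x t a b) (0, 0, 0, 0, 0, Pi.single α 1, 0, 0)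

/-- Composed partial derivative `(∂H/∂x^α_[11])[x]`. -/
noncomputable def sl11 {n : ℕ} (H : Jet2 n → ℝ) (x : ℝ → ℝ → ℝ → Fin n → ℝ)
    (α : Fin n) : ℝ → ℝ → ℝ → ℝ :=
  fun t a b => fderiv ℝ H (jet2 x t a b) (0, 0, 0, 0, 0, 0, Pi.single α 1, 0)

/-- Composed partial derivative `(∂H/∂x^α_[02])[x]`. -/
noncomputable def sl02 {n : ℕ} (H : Jet2 n → ℝ) (x : ℝ → ℝ → ℝ → Fin n → ℝ)
    (α : Fin n) : ℝ → ℝ → ℝ → ℝ :=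
  fun t a b => fderiv ℝ H (jet2 x t a b) (0, 0, 0, 0, 0, 0, 0, Pi.single α 1)

/-- Variational derivative `δ_α H[x]` on the two-dimensional spatial domain. -/
noncomputable def varDer2 {n : ℕ} (H : Jet2 n → ℝ) (x : ℝ → ℝ → ℝ → Fin n → ℝ)
    (α : Fin n) : ℝ → ℝ → ℝ → ℝ :=
  fun t a b =>
    sl00 H x α t a b - dz1 (sl10 H x α) t a b - dz2 (sl01 H x α) t a b
      + dz1 (dz1 (sl20 H x α)) t a b + dz1 (dz2 (sl11 H x α)) t a b
      + dz2 (dz2 (sl02 H x α)) t a b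

/-- Boundary contribution on edges with normal direction `z¹`:
`ẋ^α (H^[10]_α - ∂₁H^[20]_α - ∂₂H^[11]_α) + ẋ^α_[10] H^[20]_α` (summed over `α`). -/
noncomputable def edge1 {n : ℕ} (H : Jet2 n → ℝ) (x : ℝ → ℝ → ℝ → Fin n → ℝ) :
    ℝ → ℝ → ℝ → ℝ :=
  fun t a b =>
    ∑ α : Fin n,
      (pt2 x t a b α * (sl10 H x α t a b - dz1 (sl20 H x α) t a b - dz2 (sl11 H x α) t a b)
        + pt2 (dz1 x) t a b α * sl20 H x α t a b)

/-- Boundary contribution on edges with normal direction `z²`: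
`ẋ^α (H^[01]_α - ∂₂H^[02]_α - ∂₁H^[11]_α) + ẋ^α_[01] H^[02]_α` (summed over `α`). -/
noncomputable def edge2 {n : ℕ} (H : Jet2 n → ℝ) (x : ℝ → ℝ → ℝ → Fin n → ℝ) :
    ℝ → ℝ → ℝ → ℝ :=
  fun t a b =>
    ∑ α : Fin n,
      (pt2 x t a b α * (sl01 H x α t a b - dz2 (sl02 H x α) t a b - dz1 (sl11 H x α) t a b)
        + pt2 (dz2 x) t a b α * sl02 H x α t a b)

/-- Corner contribution `ẋ^α H^[11]_α` (summed over `α`). -/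
noncomputable def corner2 {n : ℕ} (H : Jet2 n → ℝ) (x : ℝ → ℝ → ℝ → Fin n → ℝ) :
    ℝ → ℝ → ℝ → ℝ :=
  fun t a b => ∑ α : Fin n, pt2 x t a b α * sl11 H x α t a b

/-- Gradient component `∂_{β_c} H_c (x_c(t))` of the controller Hamiltonian. -/
noncomputable def gradC {nc : ℕ} (Hc : (Fin nc → ℝ) → ℝ) (xc : ℝ → Fin nc → ℝ)
    (βc : Fin nc) (t : ℝ) : ℝ :=
  fderiv ℝ Hc (xc t) (Pi.single βc 1)

/-!
Differentiating `∬_B 𝒞[x]` in time and moving all spatial derivatives off `ẋ` turns the integrand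
into `ẋ^α δ_α𝒞[x]` plus a divergence. The divergence theorem converts the latter into integrals of
the edge densities and corner values of the corner density, which vanish by (d). In the remaining
integral the plant equation is inserted: by (b) the drift contributes `-G_c^λ K y`, and by (c) the
input contributes nothing. By (a) the state `x_c^λ` is driven by `G_c^λ u_c = G_c^λ K ∬_B y` alone,
and the two rates cancel.
-/

section SmoothFields

open scoped ContDiff

variable {E F ι : Type*} [NormedAddCommGroup E] [NormedSpace ℝ E] [NormedAddCommGroup F]
  [NormedSpace ℝ F] {f g : ℝ → ℝ → ℝ → E}

/-- A field `f(t,z¹,z²)` that is jointly `C^∞` in time and space. -/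
def IsSmoothField (f : ℝ → ℝ → ℝ → E) : Prop :=
  ContDiff ℝ ∞ fun q : ℝ × ℝ × ℝ => f q.1 q.2.1 q.2.2

/-- The derivative of a field along the direction `v` in space-time. It lets `∂ₜ`, `∂₁` and `∂₂` be
treated uniformly; `lineDeriv` is used because it agrees with them for every field, even a
non-differentiable one. -/
noncomputable def dirDeriv (v : ℝ × ℝ × ℝ) (f : ℝ → ℝ → ℝ → E) : ℝ → ℝ → ℝ → E :=
  fun t a b => lineDeriv ℝ (fun q : ℝ × ℝ × ℝ => f q.1 q.2.1 q.2.2) (t, a, b) v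

/-- The `α`-th coordinate of a vector-valued field, as a scalar field. -/
def component (x : ℝ → ℝ → ℝ → ι → ℝ) (α : ι) : ℝ → ℝ → ℝ → ℝ :=
  fun t a b => x t a b α

lemma pt2_eq_dirDeriv (f : ℝ → ℝ → ℝ → E) : pt2 f = dirDeriv (1, 0, 0) f := by
  funext t a b
  simp [pt2, dirDeriv, lineDeriv, deriv_comp_const_add (f := fun s => f s a b)]

lemma dz1_eq_dirDeriv (f : ℝ → ℝ → ℝ → E) : dz1 f = dirDeriv (0, 1, 0) f := by
  funext t a b
  simp [dz1, dirDeriv, lineDeriv, deriv_comp_const_add (f := fun s => f t s b)]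

lemma dz2_eq_dirDeriv (f : ℝ → ℝ → ℝ → E) : dz2 f = dirDeriv (0, 0, 1) f := by
  funext t a b
  simp [dz2, dirDeriv, lineDeriv, deriv_comp_const_add (f := fun s => f t a s)]

namespace IsSmoothField

protected lemma differentiable (hf : IsSmoothField f) :
    Differentiable ℝ fun q : ℝ × ℝ × ℝ => f q.1 q.2.1 q.2.2 :=
  ContDiff.differentiable hf (by simp)

lemma continuous_slice (hf : IsSmoothField f) (t : ℝ) : Continuous (Function.uncurry (f t)) :=
  (ContDiff.continuous hf).comp (by fun_prop : Continuous fun p : ℝ × ℝ => (t, p.1, p.2))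

lemma hasDerivAt_pt2 (hf : IsSmoothField f) (t a b : ℝ) :
    HasDerivAt (fun s => f s a b) (pt2 f t a b) t :=
  (hf.differentiable.comp (by fun_prop : Differentiable ℝ fun s : ℝ => (s, a, b)) t).hasDerivAt

lemma dirDeriv_eq_fderiv (hf : IsSmoothField f) (v : ℝ × ℝ × ℝ) :
    dirDeriv v f = fun t a b => fderiv ℝ (fun q : ℝ × ℝ × ℝ => f q.1 q.2.1 q.2.2) (t, a, b) v := by
  funext t a b
  exact (hf.differentiable _).lineDeriv_eq_fderiv

lemma contDiff_fderiv (hf : IsSmoothField f) :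
    ContDiff ℝ ∞ (fderiv ℝ fun q : ℝ × ℝ × ℝ => f q.1 q.2.1 q.2.2) :=
  ContDiff.fderiv_right (n := ∞) hf (by simp)

protected lemma dirDeriv (hf : IsSmoothField f) (v : ℝ × ℝ × ℝ) :
    IsSmoothField (dirDeriv v f) := by
  rw [hf.dirDeriv_eq_fderiv]
  exact hf.contDiff_fderiv.clm_apply contDiff_const

protected lemma pt2 (hf : IsSmoothField f) : IsSmoothField (pt2 f) :=
  pt2_eq_dirDeriv f ▸ hf.dirDeriv _

protected lemma dz1 (hf : IsSmoothField f) : IsSmoothField (dz1 f) :=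
  dz1_eq_dirDeriv f ▸ hf.dirDeriv _

protected lemma dz2 (hf : IsSmoothField f) : IsSmoothField (dz2 f) :=
  dz2_eq_dirDeriv f ▸ hf.dirDeriv _

lemma dirDeriv_comm (hf : IsSmoothField f) (v w : ℝ × ℝ × ℝ) :
    dirDeriv v (dirDeriv w f) = dirDeriv w (dirDeriv v f) := by
  have second_deriv (v w : ℝ × ℝ × ℝ) (t a b : ℝ) : dirDeriv v (dirDeriv w f) t a b =
      fderiv ℝ (fderiv ℝ fun q : ℝ × ℝ × ℝ => f q.1 q.2.1 q.2.2) (t, a, b) v w := by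
    have apply_const := DFunLike.congr_fun (fderiv_clm_apply
      (hf.contDiff_fderiv.differentiable (by simp) (t, a, b)) (differentiableAt_const w)) v
    rw [(hf.dirDeriv w).dirDeriv_eq_fderiv, hf.dirDeriv_eq_fderiv]
    simpa using apply_const
  have two_le_infty : minSmoothness ℝ 2 ≤ ∞ := by
    simpa using WithTop.coe_le_coe.2 (le_top : (2 : ℕ∞) ≤ ⊤)
  funext t a b
  rw [second_deriv, second_deriv]
  exact ((ContDiff.contDiffAt hf).isSymmSndFDerivAt two_le_infty).eq v w

protected lemma add (hf : IsSmoothField f) (hg : IsSmoothField g) : IsSmoothField (f + g) :=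
  ContDiff.add hf hg

protected lemma sub (hf : IsSmoothField f) (hg : IsSmoothField g) : IsSmoothField (f - g) :=
  ContDiff.sub hf hg

protected lemma mul {f g : ℝ → ℝ → ℝ → ℝ} (hf : IsSmoothField f) (hg : IsSmoothField g) :
    IsSmoothField (f * g) :=
  ContDiff.mul hf hg

protected lemma sum {s : Finset ι} {f : ι → ℝ → ℝ → ℝ → E} (hf : ∀ i ∈ s, IsSmoothField (f i)) :
    IsSmoothField (∑ i ∈ s, f i) := by
  simpa only [IsSmoothField, Finset.sum_apply] using ContDiff.sum hf

protected lemma component [Fintype ι] {x : ℝ → ℝ → ℝ → ι → ℝ} (hx : IsSmoothField x) (α : ι) :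
    IsSmoothField (component x α) :=
  contDiff_pi.1 hx α

lemma contDiff_comp {φ : E → F} (hφ : ContDiff ℝ ∞ φ) (hf : IsSmoothField f) :
    IsSmoothField fun t a b => φ (f t a b) :=
  ContDiff.comp hφ hf

lemma dirDeriv_add (hf : IsSmoothField f) (hg : IsSmoothField g) (v : ℝ × ℝ × ℝ) :
    dirDeriv v (f + g) = dirDeriv v f + dirDeriv v g := by
  rw [(hf.add hg).dirDeriv_eq_fderiv, hf.dirDeriv_eq_fderiv, hg.dirDeriv_eq_fderiv]
  funext t a b
  exact DFunLike.congr_fun (fderiv_fun_add (hf.differentiable _) (hg.differentiable _)) v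

lemma dirDeriv_sub (hf : IsSmoothField f) (hg : IsSmoothField g) (v : ℝ × ℝ × ℝ) :
    dirDeriv v (f - g) = dirDeriv v f - dirDeriv v g := by
  rw [(hf.sub hg).dirDeriv_eq_fderiv, hf.dirDeriv_eq_fderiv, hg.dirDeriv_eq_fderiv]
  funext t a b
  exact DFunLike.congr_fun (fderiv_fun_sub (hf.differentiable _) (hg.differentiable _)) v

lemma dirDeriv_mul {f g : ℝ → ℝ → ℝ → ℝ} (hf : IsSmoothField f) (hg : IsSmoothField g)
    (v : ℝ × ℝ × ℝ) : dirDeriv v (f * g) = dirDeriv v f * g + f * dirDeriv v g := by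
  rw [(hf.mul hg).dirDeriv_eq_fderiv, hf.dirDeriv_eq_fderiv, hg.dirDeriv_eq_fderiv]
  funext t a b
  have leibniz := DFunLike.congr_fun (fderiv_fun_mul (hf.differentiable (t, a, b))
    (hg.differentiable (t, a, b))) v
  simpa [mul_comm, add_comm] using leibniz

lemma dirDeriv_sum {s : Finset ι} {f : ι → ℝ → ℝ → ℝ → E} (hf : ∀ i ∈ s, IsSmoothField (f i))
    (v : ℝ × ℝ × ℝ) : dirDeriv v (∑ i ∈ s, f i) = ∑ i ∈ s, dirDeriv v (f i) := by
  rw [(IsSmoothField.sum hf).dirDeriv_eq_fderiv,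
    Finset.sum_congr rfl fun i hi => (hf i hi).dirDeriv_eq_fderiv v]
  funext t a b
  simp only [Finset.sum_apply]
  rw [fderiv_fun_sum fun i hi => (hf i hi).differentiable _, sum_apply]

lemma dirDeriv_component [Fintype ι] {x : ℝ → ℝ → ℝ → ι → ℝ} (hx : IsSmoothField x)
    (v : ℝ × ℝ × ℝ) (α : ι) : dirDeriv v (component x α) = component (dirDeriv v x) α := by
  rw [(hx.component α).dirDeriv_eq_fderiv, hx.dirDeriv_eq_fderiv]
  funext t a b
  exact DFunLike.congr_fun
    (hasFDerivAt_pi'.1 (hx.differentiable (t, a, b)).hasFDerivAt α).fderiv v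

/-- Splitting the mixed term symmetrically between the two fluxes leaves the total derivative
`∂_v ∂_w (u c₁₁)`, which is where the corner terms come from. -/
lemma second_order_leibniz {u c₀₀ c₁₀ c₀₁ c₂₀ c₁₁ c₀₂ : ℝ → ℝ → ℝ → ℝ} (hu : IsSmoothField u)
    (h₁₀ : IsSmoothField c₁₀) (h₀₁ : IsSmoothField c₀₁) (h₂₀ : IsSmoothField c₂₀)
    (h₁₁ : IsSmoothField c₁₁) (h₀₂ : IsSmoothField c₀₂) (v w : ℝ × ℝ × ℝ) :
    u * c₀₀ + dirDeriv v u * c₁₀ + dirDeriv w u * c₀₁ + dirDeriv v (dirDeriv v u) * c₂₀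
        + dirDeriv v (dirDeriv w u) * c₁₁ + dirDeriv w (dirDeriv w u) * c₀₂ =
      u * (c₀₀ - dirDeriv v c₁₀ - dirDeriv w c₀₁ + dirDeriv v (dirDeriv v c₂₀)
        + dirDeriv v (dirDeriv w c₁₁) + dirDeriv w (dirDeriv w c₀₂))
      + (dirDeriv v (u * (c₁₀ - dirDeriv v c₂₀ - dirDeriv w c₁₁) + dirDeriv v u * c₂₀
          + dirDeriv w (u * c₁₁))
        + dirDeriv w (u * (c₀₁ - dirDeriv w c₀₂ - dirDeriv v c₁₁) + dirDeriv w u * c₀₂)) := by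
  have hv := h₁₀.sub (h₂₀.dirDeriv v)
  have hw := h₀₁.sub (h₀₂.dirDeriv w)
  have hv' := hv.sub (h₁₁.dirDeriv w)
  have hw' := hw.sub (h₁₁.dirDeriv v)
  have huv := hu.dirDeriv v
  have huw := hu.dirDeriv w
  rw [dirDeriv_add ((hu.mul hv').add (huv.mul h₂₀)) ((hu.mul h₁₁).dirDeriv w),
    dirDeriv_add (hu.mul hv') (huv.mul h₂₀), dirDeriv_add (hu.mul hw') (huw.mul h₀₂),
    dirDeriv_mul hu hv', dirDeriv_sub hv (h₁₁.dirDeriv w), dirDeriv_sub h₁₀ (h₂₀.dirDeriv v),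
    dirDeriv_mul hu hw', dirDeriv_sub hw (h₁₁.dirDeriv v), dirDeriv_sub h₀₁ (h₀₂.dirDeriv w),
    dirDeriv_mul huv h₂₀, dirDeriv_mul huw h₀₂, dirDeriv_mul hu h₁₁ w,
    dirDeriv_add (huw.mul h₁₁) (hu.mul (h₁₁.dirDeriv w)), dirDeriv_mul huw h₁₁,
    dirDeriv_mul hu (h₁₁.dirDeriv w), h₁₁.dirDeriv_comm w v]
  ring

end IsSmoothField

end SmoothFields

section DoubleIntegrals

variable {E : Type*} [NormedAddCommGroup E] [NormedSpace ℝ E]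

lemma hasDerivAt_intervalIntegral_of_continuous {F F' : ℝ → ℝ → E}
    (hF : Continuous (Function.uncurry F)) (hF' : Continuous (Function.uncurry F'))
    (hderiv : ∀ t a, HasDerivAt (fun s => F s a) (F' t a) t) (a₁ b₁ t : ℝ) :
    HasDerivAt (fun s => ∫ a in a₁..b₁, F s a) (∫ a in a₁..b₁, F' t a) t := by
  obtain ⟨M, hM⟩ := ((isCompact_closedBall t 1).prod
    (isCompact_uIcc (a := a₁) (b := b₁))).exists_bound_of_continuousOn hF'.continuousOn
  refine (intervalIntegral.hasDerivAt_integral_of_dominated_loc_of_deriv_le (bound := fun _ => M)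
    (Metric.closedBall_mem_nhds t one_pos) (.of_forall fun s => ?_) ?_ ?_ (.of_forall ?_)
    intervalIntegrable_const (.of_forall fun a _ s _ => hderiv s a)).2
  · exact (hF.uncurry_left s).aestronglyMeasurable
  · exact (hF.uncurry_left t).intervalIntegrable _ _
  · exact (hF'.uncurry_left t).aestronglyMeasurable
  · exact fun a ha s hs => hM (s, a) ⟨hs, Set.uIoc_subset_uIcc ha⟩

lemma IsSmoothField.hasDerivAt_integral_integral {f : ℝ → ℝ → ℝ → E} (hf : IsSmoothField f)
    (a₁ b₁ a₂ b₂ t : ℝ) :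
    HasDerivAt (fun s => ∫ a in a₁..b₁, ∫ b in a₂..b₂, f s a b)
      (∫ a in a₁..b₁, ∫ b in a₂..b₂, pt2 f t a b) t := by
  have continuous_inner {g : ℝ → ℝ → ℝ → E} (hg : IsSmoothField g) :
      Continuous (Function.uncurry fun s a => ∫ b in a₂..b₂, g s a b) :=
    intervalIntegral.continuous_parametric_intervalIntegral_of_continuous'
      (f := fun (p : ℝ × ℝ) b => g p.1 p.2 b)
      ((ContDiff.continuous hg).comp
        (by fun_prop : Continuous fun p : (ℝ × ℝ) × ℝ => (p.1.1, p.1.2, p.2))) _ _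
  have continuous_time {g : ℝ → ℝ → ℝ → E} (hg : IsSmoothField g) (a : ℝ) :
      Continuous (Function.uncurry fun s b => g s a b) :=
    (ContDiff.continuous hg).comp (by fun_prop : Continuous fun p : ℝ × ℝ => (p.1, a, p.2))
  exact hasDerivAt_intervalIntegral_of_continuous (continuous_inner hf) (continuous_inner hf.pt2)
    (fun s a => hasDerivAt_intervalIntegral_of_continuous (continuous_time hf a)
      (continuous_time hf.pt2 a) (fun s b => hf.hasDerivAt_pt2 s a b) a₂ b₂ s) a₁ b₁ t

lemma integral_integral_add {f g : ℝ → ℝ → E} (hf : Continuous (Function.uncurry f))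
    (hg : Continuous (Function.uncurry g)) (a₁ b₁ a₂ b₂ : ℝ) :
    ∫ a in a₁..b₁, ∫ b in a₂..b₂, (f a b + g a b) =
      (∫ a in a₁..b₁, ∫ b in a₂..b₂, f a b) + ∫ a in a₁..b₁, ∫ b in a₂..b₂, g a b := by
  have inner (a : ℝ) := intervalIntegral.integral_add
    ((hf.uncurry_left a).intervalIntegrable (μ := volume) a₂ b₂)
    ((hg.uncurry_left a).intervalIntegrable a₂ b₂)
  simp only [inner]
  refine intervalIntegral.integral_add ?_ ?_ <;>
  exact (intervalIntegral.continuous_parametric_intervalIntegral_of_continuous' (by assumption)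
    _ _).intervalIntegrable _ _

lemma integral_integral_sum_mul {ι : Type*} {s : Finset ι} {y : ι → ℝ → ℝ → ℝ}
    (hy : ∀ i ∈ s, Continuous (Function.uncurry (y i))) (k : ι → ℝ) (a₁ b₁ a₂ b₂ : ℝ) :
    ∫ a in a₁..b₁, ∫ b in a₂..b₂, ∑ i ∈ s, k i * y i a b =
      ∑ i ∈ s, k i * ∫ a in a₁..b₁, ∫ b in a₂..b₂, y i a b := by
  have inner (a : ℝ) : ∫ b in a₂..b₂, ∑ i ∈ s, k i * y i a b =
      ∑ i ∈ s, k i * ∫ b in a₂..b₂, y i a b := by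
    rw [intervalIntegral.integral_finsetSum fun i hi =>
      (((hy i hi).uncurry_left a).intervalIntegrable _ _).const_mul (k i)]
    simp only [intervalIntegral.integral_const_mul]
  simp only [inner]
  rw [intervalIntegral.integral_finsetSum fun i hi =>
    ((intervalIntegral.continuous_parametric_intervalIntegral_of_continuous' (hy i hi)
      _ _).intervalIntegrable _ _).const_mul (k i)]
  simp only [intervalIntegral.integral_const_mul]

lemma integral_integral_congr {f g : ℝ → ℝ → E} {a₁ b₁ a₂ b₂ : ℝ}
    (h : ∀ a ∈ Set.uIcc a₁ b₁, ∀ b ∈ Set.uIcc a₂ b₂, f a b = g a b) :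
    ∫ a in a₁..b₁, ∫ b in a₂..b₂, f a b = ∫ a in a₁..b₁, ∫ b in a₂..b₂, g a b :=
  intervalIntegral.integral_congr fun a ha => intervalIntegral.integral_congr fun b hb =>
    h a ha b hb

lemma IsSmoothField.integral_dz2 [CompleteSpace E] {f : ℝ → ℝ → ℝ → E} (hf : IsSmoothField f)
    (t a a₂ b₂ : ℝ) : ∫ b in a₂..b₂, dz2 f t a b = f t a b₂ - f t a a₂ :=
  intervalIntegral.integral_deriv_eq_sub
    (fun b _ => hf.differentiable.comp (by fun_prop : Differentiable ℝ fun s : ℝ => (t, a, s)) b)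
    ((hf.dz2.continuous_slice t).uncurry_left a |>.intervalIntegrable _ _)

lemma IsSmoothField.integral_integral_divergence {f g : ℝ → ℝ → ℝ → E} (hf : IsSmoothField f)
    (hg : IsSmoothField g) (a₁ b₁ a₂ b₂ t : ℝ) :
    ∫ a in a₁..b₁, ∫ b in a₂..b₂, (dz1 f t a b + dz2 g t a b) =
      (∫ b in a₂..b₂, f t b₁ b) - (∫ b in a₂..b₂, f t a₁ b)
        + ((∫ a in a₁..b₁, g t a b₂) - ∫ a in a₁..b₁, g t a a₂) := by
  have hasFDerivAt_slice {h : ℝ → ℝ → ℝ → E} (hh : IsSmoothField h) (p : ℝ × ℝ) :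
      HasFDerivAt (fun p : ℝ × ℝ => h t p.1 p.2)
        ((fderiv ℝ (fun q : ℝ × ℝ × ℝ => h q.1 q.2.1 q.2.2) (t, p)).comp
          (ContinuousLinearMap.inr ℝ ℝ (ℝ × ℝ))) p :=
    (hh.differentiable (t, p)).hasFDerivAt.comp p (hasFDerivAt_prodMk_right t p)
  have divergence := integral2_divergence_prod_of_hasFDerivAt
    (Function.uncurry (f t)) (Function.uncurry (g t)) _ _ a₁ a₂ b₁ b₂
    (hf.continuous_slice t).continuousOn (hg.continuous_slice t).continuousOn
    (fun p _ => hasFDerivAt_slice hf p) (fun p _ => hasFDerivAt_slice hg p)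
  have integrable : IntegrableOn (Function.uncurry (dz1 f t) + Function.uncurry (dz2 g t))
      (Set.uIcc a₁ b₁ ×ˢ Set.uIcc a₂ b₂) :=
    ((hf.dz1.continuous_slice t).add (hg.dz2.continuous_slice t)).continuousOn.integrableOn_compact
      (isCompact_uIcc.prod isCompact_uIcc)
  rw [dz1_eq_dirDeriv, dz2_eq_dirDeriv, hf.dirDeriv_eq_fderiv, hg.dirDeriv_eq_fderiv]
    at integrable ⊢
  refine (divergence integrable).trans ?_
  simp only [Function.uncurry_apply_pair]
  abel

end DoubleIntegrals

section FirstVariation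

open scoped ContDiff

variable {n : ℕ} {C : Jet2 n → ℝ} {x : ℝ → ℝ → ℝ → Fin n → ℝ}

lemma jet2_apply_eq_sum (T : Jet2 n →L[ℝ] ℝ) (v₀₀ v₁₀ v₀₁ v₂₀ v₁₁ v₀₂ : Fin n → ℝ) :
    T (0, 0, v₀₀, v₁₀, v₀₁, v₂₀, v₁₁, v₀₂) = ∑ α,
      (v₀₀ α * T (0, 0, Pi.single α 1, 0, 0, 0, 0, 0)
      + v₁₀ α * T (0, 0, 0, Pi.single α 1, 0, 0, 0, 0)
      + v₀₁ α * T (0, 0, 0, 0, Pi.single α 1, 0, 0, 0)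
      + v₂₀ α * T (0, 0, 0, 0, 0, Pi.single α 1, 0, 0)
      + v₁₁ α * T (0, 0, 0, 0, 0, 0, Pi.single α 1, 0)
      + v₀₂ α * T (0, 0, 0, 0, 0, 0, 0, Pi.single α 1)) := by
  have basis_expansion (v : Fin n → ℝ) : v = ∑ α, v α • Pi.single α (1 : ℝ) := by
    simpa only [← Pi.single_smul', smul_eq_mul, mul_one] using (Finset.univ_sum_single v).symm
  simp only [← smul_eq_mul, ← map_smul, ← map_add, ← map_sum]
  congr 1
  simp only [Prod.smul_mk, Prod.mk_add_mk, smul_zero, add_zero, zero_add, Prod.ext_iff,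
    Prod.fst_sum, Prod.snd_sum, Finset.sum_const_zero, ← basis_expansion, and_self]

/-- The rate at which a density `C` passes through the boundary of `[a₁, b₁] × [a₂, b₂]` along the
field `x`: the edge densities `edge1`, `edge2` integrated over opposite edges with opposite signs,
plus the alternating sum of `corner2` over the corners. -/
noncomputable def boundaryFlux (C : Jet2 n → ℝ) (x : ℝ → ℝ → ℝ → Fin n → ℝ) (a₁ b₁ a₂ b₂ : ℝ)
    (t : ℝ) : ℝ :=
  (∫ b in a₂..b₂, edge1 C x t b₁ b) - (∫ b in a₂..b₂, edge1 C x t a₁ b)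
    + ((∫ a in a₁..b₁, edge2 C x t a b₂) - ∫ a in a₁..b₁, edge2 C x t a a₂)
    + (corner2 C x t b₁ b₂ - corner2 C x t b₁ a₂ - (corner2 C x t a₁ b₂ - corner2 C x t a₁ a₂))

lemma edge1_eq_sum (C : Jet2 n → ℝ) (x : ℝ → ℝ → ℝ → Fin n → ℝ) :
    edge1 C x = ∑ α, (component (pt2 x) α * (sl10 C x α - dz1 (sl20 C x α) - dz2 (sl11 C x α))
      + component (pt2 (dz1 x)) α * sl20 C x α) := by
  funext t a b
  simp only [edge1, component, Finset.sum_apply, Pi.add_apply, Pi.mul_apply, Pi.sub_apply]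

lemma edge2_eq_sum (C : Jet2 n → ℝ) (x : ℝ → ℝ → ℝ → Fin n → ℝ) :
    edge2 C x = ∑ α, (component (pt2 x) α * (sl01 C x α - dz2 (sl02 C x α) - dz1 (sl11 C x α))
      + component (pt2 (dz2 x)) α * sl02 C x α) := by
  funext t a b
  simp only [edge2, component, Finset.sum_apply, Pi.add_apply, Pi.mul_apply, Pi.sub_apply]

lemma corner2_eq_sum (C : Jet2 n → ℝ) (x : ℝ → ℝ → ℝ → Fin n → ℝ) :
    corner2 C x = ∑ α, component (pt2 x) α * sl11 C x α := by
  funext t a b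
  simp only [corner2, component, Finset.sum_apply, Pi.mul_apply]

namespace IsSmoothField

protected lemma jet2 (hx : IsSmoothField x) : IsSmoothField (jet2 x) := by
  have contDiff_z1 : ContDiff ℝ ∞ fun q : ℝ × ℝ × ℝ => q.2.1 := by fun_prop
  have contDiff_z2 : ContDiff ℝ ∞ fun q : ℝ × ℝ × ℝ => q.2.2 := by fun_prop
  exact contDiff_z1.prodMk <| contDiff_z2.prodMk <| ContDiff.prodMk hx <| ContDiff.prodMk hx.dz1 <|
    ContDiff.prodMk hx.dz2 <| ContDiff.prodMk hx.dz1.dz1 <| ContDiff.prodMk hx.dz2.dz1 hx.dz2.dz2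

lemma fderiv_jet2 (hx : IsSmoothField x) (hC : ContDiff ℝ ∞ C) (e : Jet2 n) :
    IsSmoothField fun t a b => fderiv ℝ C (jet2 x t a b) e :=
  contDiff_comp ((ContDiff.fderiv_right (n := ∞) hC (by simp)).clm_apply contDiff_const) hx.jet2

protected lemma sl10 (hx : IsSmoothField x) (hC : ContDiff ℝ ∞ C) (α : Fin n) :
    IsSmoothField (sl10 C x α) := hx.fderiv_jet2 hC _

protected lemma sl01 (hx : IsSmoothField x) (hC : ContDiff ℝ ∞ C) (α : Fin n) :
    IsSmoothField (sl01 C x α) := hx.fderiv_jet2 hC _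

protected lemma sl20 (hx : IsSmoothField x) (hC : ContDiff ℝ ∞ C) (α : Fin n) :
    IsSmoothField (sl20 C x α) := hx.fderiv_jet2 hC _

protected lemma sl11 (hx : IsSmoothField x) (hC : ContDiff ℝ ∞ C) (α : Fin n) :
    IsSmoothField (sl11 C x α) := hx.fderiv_jet2 hC _

protected lemma sl02 (hx : IsSmoothField x) (hC : ContDiff ℝ ∞ C) (α : Fin n) :
    IsSmoothField (sl02 C x α) := hx.fderiv_jet2 hC _

protected lemma varDer2 (hx : IsSmoothField x) (hC : ContDiff ℝ ∞ C) (α : Fin n) :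
    IsSmoothField (varDer2 C x α) :=
  ((((IsSmoothField.sub (hx.fderiv_jet2 hC _) (hx.sl10 hC α).dz1).sub (hx.sl01 hC α).dz2).add
    (hx.sl20 hC α).dz1.dz1).add (hx.sl11 hC α).dz2.dz1).add (hx.sl02 hC α).dz2.dz2

lemma edge1_summand (hx : IsSmoothField x) (hC : ContDiff ℝ ∞ C) (α : Fin n) :
    IsSmoothField (component (pt2 x) α * (sl10 C x α - dz1 (sl20 C x α) - dz2 (sl11 C x α))
      + component (pt2 (dz1 x)) α * sl20 C x α) :=
  ((hx.pt2.component α).mul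
    (((hx.sl10 hC α).sub (hx.sl20 hC α).dz1).sub (hx.sl11 hC α).dz2)).add
    ((hx.dz1.pt2.component α).mul (hx.sl20 hC α))

lemma edge2_summand (hx : IsSmoothField x) (hC : ContDiff ℝ ∞ C) (α : Fin n) :
    IsSmoothField (component (pt2 x) α * (sl01 C x α - dz2 (sl02 C x α) - dz1 (sl11 C x α))
      + component (pt2 (dz2 x)) α * sl02 C x α) :=
  ((hx.pt2.component α).mul
    (((hx.sl01 hC α).sub (hx.sl02 hC α).dz2).sub (hx.sl11 hC α).dz1)).add
    ((hx.dz2.pt2.component α).mul (hx.sl02 hC α))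

lemma corner2_summand (hx : IsSmoothField x) (hC : ContDiff ℝ ∞ C) (α : Fin n) :
    IsSmoothField (component (pt2 x) α * sl11 C x α) :=
  (hx.pt2.component α).mul (hx.sl11 hC α)

protected lemma edge1 (hx : IsSmoothField x) (hC : ContDiff ℝ ∞ C) : IsSmoothField (edge1 C x) :=
  edge1_eq_sum C x ▸ .sum fun α _ => hx.edge1_summand hC α

protected lemma edge2 (hx : IsSmoothField x) (hC : ContDiff ℝ ∞ C) : IsSmoothField (edge2 C x) :=
  edge2_eq_sum C x ▸ .sum fun α _ => hx.edge2_summand hC α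

protected lemma corner2 (hx : IsSmoothField x) (hC : ContDiff ℝ ∞ C) :
    IsSmoothField (corner2 C x) :=
  corner2_eq_sum C x ▸ .sum fun α _ => hx.corner2_summand hC α

lemma pt2_density_eq_sum (hx : IsSmoothField x) (hC : ContDiff ℝ ∞ C) :
    pt2 (fun t a b => C (jet2 x t a b)) = ∑ α,
      (component (pt2 x) α * sl00 C x α + component (pt2 (dz1 x)) α * sl10 C x α
        + component (pt2 (dz2 x)) α * sl01 C x α + component (pt2 (dz1 (dz1 x))) α * sl20 C x α
        + component (pt2 (dz1 (dz2 x))) α * sl11 C x α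
        + component (pt2 (dz2 (dz2 x))) α * sl02 C x α) := by
  funext t a b
  have hasDerivAt_jet : HasDerivAt (fun s => jet2 x s a b) (0, 0, pt2 x t a b,
      pt2 (dz1 x) t a b, pt2 (dz2 x) t a b, pt2 (dz1 (dz1 x)) t a b, pt2 (dz1 (dz2 x)) t a b,
      pt2 (dz2 (dz2 x)) t a b) t :=
    (hasDerivAt_const t a).prodMk <| (hasDerivAt_const t b).prodMk <|
      (hx.hasDerivAt_pt2 t a b).prodMk <| (hx.dz1.hasDerivAt_pt2 t a b).prodMk <|
      (hx.dz2.hasDerivAt_pt2 t a b).prodMk <| (hx.dz1.dz1.hasDerivAt_pt2 t a b).prodMk <|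
      (hx.dz2.dz1.hasDerivAt_pt2 t a b).prodMk (hx.dz2.dz2.hasDerivAt_pt2 t a b)
  have chain_rule := (hC.differentiable (by simp) (jet2 x t a b)).hasFDerivAt.comp_hasDerivAt t
    hasDerivAt_jet
  refine (chain_rule.deriv.trans (jet2_apply_eq_sum _ _ _ _ _ _ _)).trans ?_
  simp only [Finset.sum_apply, Pi.add_apply, Pi.mul_apply, component, sl00,
    sl10, sl01, sl20, sl11, sl02]

lemma component_pt2_dirDeriv (hx : IsSmoothField x) (v : ℝ × ℝ × ℝ) (α : Fin n) :
    component (pt2 (dirDeriv v x)) α = dirDeriv v (component (pt2 x) α) := by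
  rw [hx.pt2.dirDeriv_component, pt2_eq_dirDeriv, pt2_eq_dirDeriv, hx.dirDeriv_comm]

lemma divergence_edge_corner_eq_sum (hx : IsSmoothField x) (hC : ContDiff ℝ ∞ C) :
    dz1 (edge1 C x + dz2 (corner2 C x)) + dz2 (edge2 C x) = ∑ α,
      (dz1 (component (pt2 x) α * (sl10 C x α - dz1 (sl20 C x α) - dz2 (sl11 C x α))
          + component (pt2 (dz1 x)) α * sl20 C x α + dz2 (component (pt2 x) α * sl11 C x α))
        + dz2 (component (pt2 x) α * (sl01 C x α - dz2 (sl02 C x α) - dz1 (sl11 C x α))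
          + component (pt2 (dz2 x)) α * sl02 C x α)) := by
  have h₁ := hx.edge1_summand hC
  have h₂ := hx.edge2_summand hC
  have h₁₂ := hx.corner2_summand hC
  rw [edge1_eq_sum, edge2_eq_sum, corner2_eq_sum, dz2_eq_dirDeriv (∑ α, _),
    dirDeriv_sum fun α _ => h₁₂ α, ← Finset.sum_add_distrib, dz1_eq_dirDeriv (∑ α, _),
    dirDeriv_sum fun α _ => (h₁ α).add ((h₁₂ α).dirDeriv _), dz2_eq_dirDeriv (∑ α, _),
    dirDeriv_sum fun α _ => h₂ α, ← Finset.sum_add_distrib]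
  simp only [dz1_eq_dirDeriv, dz2_eq_dirDeriv]

lemma pt2_density (hx : IsSmoothField x) (hC : ContDiff ℝ ∞ C) :
    pt2 (fun t a b => C (jet2 x t a b)) =
      ∑ α, component (pt2 x) α * varDer2 C x α
        + (dz1 (edge1 C x + dz2 (corner2 C x)) + dz2 (edge2 C x)) := by
  rw [hx.pt2_density_eq_sum hC, hx.divergence_edge_corner_eq_sum hC, ← Finset.sum_add_distrib]
  refine Finset.sum_congr rfl fun α _ => ?_
  have leibniz := (hx.pt2.component α).second_order_leibniz (c₀₀ := sl00 C x α) (hx.sl10 hC α)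
    (hx.sl01 hC α) (hx.sl20 hC α) (hx.sl11 hC α) (hx.sl02 hC α) (0, 1, 0) (0, 0, 1)
  simp only [dz1_eq_dirDeriv, dz2_eq_dirDeriv, hx.component_pt2_dirDeriv,
    (hx.dirDeriv _).component_pt2_dirDeriv]
  refine leibniz.trans ?_
  simp only [← dz1_eq_dirDeriv, ← dz2_eq_dirDeriv]
  rfl

lemma hasDerivAt_integral_density (hx : IsSmoothField x) (hC : ContDiff ℝ ∞ C)
    (a₁ b₁ a₂ b₂ t : ℝ) :
    HasDerivAt (fun s => ∫ a in a₁..b₁, ∫ b in a₂..b₂, C (jet2 x s a b))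
      ((∫ a in a₁..b₁, ∫ b in a₂..b₂, ∑ α, pt2 x t a b α * varDer2 C x α t a b)
        + boundaryFlux C x a₁ b₁ a₂ b₂ t) t := by
  have hflux₁ : IsSmoothField (edge1 C x + dz2 (corner2 C x)) :=
    (hx.edge1 hC).add (hx.corner2 hC).dz2
  have hvar : IsSmoothField (∑ α, component (pt2 x) α * varDer2 C x α) :=
    .sum fun α _ => (hx.pt2.component α).mul (hx.varDer2 hC α)
  have integral_flux₁ (a : ℝ) : ∫ b in a₂..b₂, (edge1 C x + dz2 (corner2 C x)) t a b =
      (∫ b in a₂..b₂, edge1 C x t a b) + (corner2 C x t a b₂ - corner2 C x t a a₂) := by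
    rw [← (hx.corner2 hC).integral_dz2]
    exact intervalIntegral.integral_add
      (((hx.edge1 hC).continuous_slice t).uncurry_left a |>.intervalIntegrable _ _)
      (((hx.corner2 hC).dz2.continuous_slice t).uncurry_left a |>.intervalIntegrable _ _)
  have integral_var_add_div := integral_integral_add (hvar.continuous_slice t)
    ((hflux₁.dz1.add (hx.edge2 hC).dz2).continuous_slice t) a₁ b₁ a₂ b₂
  refine ((contDiff_comp hC hx.jet2).hasDerivAt_integral_integral a₁ b₁ a₂ b₂ t).congr_deriv ?_
  rw [hx.pt2_density hC]
  refine integral_var_add_div.trans ?_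
  congr 1
  · simp only [Finset.sum_apply, Pi.mul_apply, component]
  · refine (hflux₁.integral_integral_divergence (hx.edge2 hC) a₁ b₁ a₂ b₂ t).trans ?_
    rw [integral_flux₁, integral_flux₁, boundaryFlux]
    ring

end IsSmoothField

lemma boundaryFlux_eq_zero {a₁ b₁ a₂ b₂ t : ℝ}
    (hedge₁ : ∀ b ∈ Set.uIcc a₂ b₂, edge1 C x t a₁ b = 0 ∧ edge1 C x t b₁ b = 0)
    (hedge₂ : ∀ a ∈ Set.uIcc a₁ b₁, edge2 C x t a a₂ = 0 ∧ edge2 C x t a b₂ = 0)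
    (hcorner : corner2 C x t a₁ a₂ = 0 ∧ corner2 C x t b₁ a₂ = 0
      ∧ corner2 C x t a₁ b₂ = 0 ∧ corner2 C x t b₁ b₂ = 0) :
    boundaryFlux C x a₁ b₁ a₂ b₂ t = 0 := by
  obtain ⟨h₁₁, h₂₁, h₁₂, h₂₂⟩ := hcorner
  rw [boundaryFlux, h₁₁, h₂₁, h₁₂, h₂₂,
    intervalIntegral.integral_congr fun b hb => (hedge₁ b hb).1,
    intervalIntegral.integral_congr fun b hb => (hedge₁ b hb).2,
    intervalIntegral.integral_congr fun a ha => (hedge₂ a ha).1,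
    intervalIntegral.integral_congr fun a ha => (hedge₂ a ha).2]
  simp

end FirstVariation

section PowerBalance

open Matrix

variable {S ν ι κ : Type*} [CommRing S] [Fintype ν] [Fintype ι] [Fintype κ]

lemma dotProduct_closedLoop_velocity {A : Matrix ν ν S} {G : Matrix ν ι S} {K : Matrix ι ι S}
    {Gc : Matrix κ ι S} {g : ι → S} {δ : ν → S} (hb : δ ᵥ* A + G *ᵥ (g ᵥ* K) = 0)
    (hc : Gc *ᵥ (δ ᵥ* G ᵥ* K) = 0) (e : ν → S) (ec : κ → S) :
    (A *ᵥ e - G *ᵥ (K *ᵥ (ec ᵥ* Gc))) ⬝ᵥ δ = -(g ᵥ* K) ⬝ᵥ (e ᵥ* G) := by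
  have drift : δ ⬝ᵥ A *ᵥ e = -(g ᵥ* K) ⬝ᵥ (e ᵥ* G) := by
    rw [dotProduct_mulVec, eq_neg_of_add_eq_zero_left hb, neg_dotProduct, neg_dotProduct,
      dotProduct_comm, dotProduct_mulVec, dotProduct_comm]
  have input : δ ⬝ᵥ G *ᵥ (K *ᵥ (ec ᵥ* Gc)) = 0 := by
    rw [dotProduct_mulVec, dotProduct_mulVec, dotProduct_comm, ← dotProduct_mulVec, hc,
      dotProduct_zero]
  rw [dotProduct_comm, dotProduct_sub, drift, input, sub_zero]

lemma sum_closedLoop_velocity_mul {A : ν → ν → S} {G : ν → ι → S} {K : ι → ι → S}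
    {Gc : κ → ι → S} {g : ι → S} {δ : ν → S}
    (hb : ∀ β, (∑ α, δ α * A α β) + ∑ ξ, ∑ η, g ξ * K ξ η * G β η = 0)
    (hc : ∀ i, ∑ α, ∑ ξ, ∑ η, δ α * G α ξ * K ξ η * Gc i η = 0) (e : ν → S) (ec : κ → S) :
    ∑ α, ((∑ β, A α β * e β) + ∑ ξ, G α ξ * -∑ η, K ξ η * ∑ i, Gc i η * ec i) * δ α =
      ∑ η, -(∑ ξ, g ξ * K ξ η) * ∑ α, G α η * e α := by
  have hb' : δ ᵥ* of A + of G *ᵥ (g ᵥ* of K) = 0 := funext fun β => by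
    have mixed : ∑ ξ, ∑ η, g ξ * K ξ η * G β η = G β ⬝ᵥ (g ᵥ* of K) := by
      rw [Finset.sum_comm]
      simp only [← Finset.sum_mul]
      exact dotProduct_comm _ _
    have hbβ := hb β
    rwa [mixed] at hbβ
  have hc' : of Gc *ᵥ (δ ᵥ* of G ᵥ* of K) = 0 := funext fun i => by
    have regroup : ∑ α, ∑ ξ, ∑ η, δ α * G α ξ * K ξ η * Gc i η =
        δ ⬝ᵥ of G *ᵥ (of K *ᵥ Gc i) := by
      simp only [dotProduct, mulVec, of_apply, Finset.mul_sum, mul_assoc]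
    have hci := hc i
    rwa [regroup, dotProduct_mulVec, dotProduct_mulVec, dotProduct_comm] at hci
  have balance := dotProduct_closedLoop_velocity hb' hc' e ec
  simpa only [dotProduct, mulVec, vecMul, of_apply, Pi.sub_apply, Pi.neg_apply, mul_neg,
    Finset.sum_neg_distrib, sub_eq_add_neg, mul_comm] using balance

end PowerBalance

/-- `A` and `Fc` stand for `𝒥 - ℛ` and `J_c - R_c`, the efforts `e` and `ec` for `δ𝓗[x]` and
`∂H_c(x_c)`. -/
theorem statement5_general {n : ℕ} {ι κ : Type*} [Fintype ι] [Fintype κ] {L1 L2 : ℝ}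
    (hL1 : 0 ≤ L1) (hL2 : 0 ≤ L2) {x : ℝ → ℝ → ℝ → Fin n → ℝ} (hx : IsSmoothField x)
    {A : Fin n → Fin n → ℝ → ℝ → ℝ → ℝ} {G : Fin n → ι → ℝ → ℝ → ℝ → ℝ}
    (hG : ∀ α ξ t, Continuous (Function.uncurry (G α ξ t)))
    {e : Fin n → ℝ → ℝ → ℝ → ℝ} (he : ∀ β t, Continuous (Function.uncurry (e β t)))
    {u : ι → ℝ → ℝ}
    (hdyn : ∀ t, ∀ a ∈ Set.Icc 0 L1, ∀ b ∈ Set.Icc 0 L2, ∀ α,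
      pt2 x t a b α = (∑ β, A α β t a b * e β t a b) + ∑ ξ, G α ξ t a b * u ξ t)
    {Fc : κ → κ → ℝ} {Gc : κ → ι → ℝ} {ec : κ → ℝ → ℝ} {xc : ℝ → κ → ℝ} {uc : ι → ℝ → ℝ}
    {lam : κ}
    (hcdyn : ∀ t, HasDerivAt (fun τ => xc τ lam)
      ((∑ βc, Fc lam βc * ec βc t) + ∑ ξ, Gc lam ξ * uc ξ t) t)
    {K : ι → ι → ℝ}
    (huc : ∀ ξ t, uc ξ t =
      ∑ η, K ξ η * ∫ a in (0 : ℝ)..L1, ∫ b in (0 : ℝ)..L2, ∑ α, G α η t a b * e α t a b)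
    (hu : ∀ ξ t, u ξ t = -∑ η, K ξ η * ∑ βc, Gc βc η * ec βc t)
    {C : Jet2 n → ℝ} (hC : ContDiff ℝ (⊤ : ℕ∞) C) (ha : ∀ βc, Fc lam βc = 0)
    (hb : ∀ t, ∀ a ∈ Set.Icc 0 L1, ∀ b ∈ Set.Icc 0 L2, ∀ β,
      (∑ α, varDer2 C x α t a b * A α β t a b)
        + ∑ ξ, ∑ η, Gc lam ξ * K ξ η * G β η t a b = 0)
    (hc : ∀ t, ∀ a ∈ Set.Icc 0 L1, ∀ b ∈ Set.Icc 0 L2, ∀ αc,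
      ∑ α, ∑ ξ, ∑ η, varDer2 C x α t a b * G α ξ t a b * K ξ η * Gc αc η = 0)
    (hd1 : ∀ t, ∀ b ∈ Set.Icc 0 L2, edge1 C x t 0 b = 0 ∧ edge1 C x t L1 b = 0)
    (hd2 : ∀ t, ∀ a ∈ Set.Icc 0 L1, edge2 C x t a 0 = 0 ∧ edge2 C x t a L2 = 0)
    (hdc : ∀ t, corner2 C x t 0 0 = 0 ∧ corner2 C x t L1 0 = 0
      ∧ corner2 C x t 0 L2 = 0 ∧ corner2 C x t L1 L2 = 0) (t s : ℝ) :
    xc t lam + (∫ a in (0 : ℝ)..L1, ∫ b in (0 : ℝ)..L2, C (jet2 x t a b)) =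
      xc s lam + ∫ a in (0 : ℝ)..L1, ∫ b in (0 : ℝ)..L2, C (jet2 x s a b) := by
  rw [← Set.uIcc_of_le hL1] at hdyn hb hc hd2
  rw [← Set.uIcc_of_le hL2] at hdyn hb hc hd1
  have hy (t : ℝ) (η : ι) :
      Continuous (Function.uncurry fun a b => ∑ α, G α η t a b * e α t a b) :=
    continuous_finsetSum _ fun α _ => (hG α η t).mul (he α t)
  have plant_rate (t : ℝ) :
      ∫ a in (0 : ℝ)..L1, ∫ b in (0 : ℝ)..L2, ∑ α, pt2 x t a b α * varDer2 C x α t a b =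
        ∑ η, -(∑ ξ, Gc lam ξ * K ξ η) *
          ∫ a in (0 : ℝ)..L1, ∫ b in (0 : ℝ)..L2, ∑ α, G α η t a b * e α t a b := by
    rw [← integral_integral_sum_mul fun η _ => hy t η]
    refine integral_integral_congr fun a ha b hb' => ?_
    simp only [hdyn t a ha b hb', hu]
    exact sum_closedLoop_velocity_mul (hb t a ha b hb') (hc t a ha b hb') _ _
  have controller_rate (t : ℝ) : (∑ βc, Fc lam βc * ec βc t) + ∑ ξ, Gc lam ξ * uc ξ t =
      ∑ η, (∑ ξ, Gc lam ξ * K ξ η) *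
        ∫ a in (0 : ℝ)..L1, ∫ b in (0 : ℝ)..L2, ∑ α, G α η t a b * e α t a b := by
    simp only [ha, zero_mul, Finset.sum_const_zero, zero_add, huc]
    exact Matrix.dotProduct_mulVec _ (Matrix.of K) _
  have stationary (t : ℝ) : HasDerivAt
      (fun τ => xc τ lam + ∫ a in (0 : ℝ)..L1, ∫ b in (0 : ℝ)..L2, C (jet2 x τ a b)) 0 t := by
    refine ((hcdyn t).add (hx.hasDerivAt_integral_density hC 0 L1 0 L2 t)).congr_deriv ?_
    rw [boundaryFlux_eq_zero (hd1 t) (hd2 t) (hdc t), plant_rate, controller_rate]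
    simp only [neg_mul, Finset.sum_neg_distrib, add_zero, add_neg_cancel]
  exact is_const_of_deriv_eq_zero (fun t => (stationary t).differentiableAt)
    (fun t => (stationary t).deriv) t s

/-- Casimir conditions, 2-dimensional spatial domain: under the
conditions (a)–(d), the functional `𝒞(t) = x_c^λ(t) + ∬_B 𝒞[x] dz¹dz²` is a
structural invariant of the closed loop. -/
theorem statement5 {n l nc : ℕ} (L1 L2 : ℝ) (hL1 : 0 < L1) (hL2 : 0 < L2)
    (H : Jet2 n → ℝ) (hH : ContDiff ℝ (⊤ : ℕ∞) H)
    (x : ℝ → ℝ → ℝ → Fin n → ℝ)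
    (hx : ContDiff ℝ (⊤ : ℕ∞) (fun q : ℝ × ℝ × ℝ => x q.1 q.2.1 q.2.2))
    (J R : Fin n → Fin n → ℝ → ℝ → ℝ → ℝ)
    (G : Fin n → Fin l → ℝ → ℝ → ℝ → ℝ)
    (hJ : ∀ α β, ContDiff ℝ (⊤ : ℕ∞) (fun q : ℝ × ℝ × ℝ => J α β q.1 q.2.1 q.2.2))
    (hR : ∀ α β, ContDiff ℝ (⊤ : ℕ∞) (fun q : ℝ × ℝ × ℝ => R α β q.1 q.2.1 q.2.2))
    (hG : ∀ α ξ, ContDiff ℝ (⊤ : ℕ∞) (fun q : ℝ × ℝ × ℝ => G α ξ q.1 q.2.1 q.2.2))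
    (u : Fin l → ℝ → ℝ)
    -- the plant dynamics hold on `B`
    (hdyn : ∀ t, ∀ a ∈ Set.Icc (0:ℝ) L1, ∀ b ∈ Set.Icc (0:ℝ) L2, ∀ α,
      pt2 x t a b α =
        (∑ β : Fin n, (J α β t a b - R α β t a b) * varDer2 H x β t a b)
          + ∑ ξ : Fin l, G α ξ t a b * u ξ t)
    -- the finite-dimensional port-Hamiltonian controller
    (Hc : (Fin nc → ℝ) → ℝ) (hHc : ContDiff ℝ (⊤ : ℕ∞) Hc)
    (Jc Rc : Fin nc → Fin nc → ℝ) (Gc : Fin nc → Fin l → ℝ)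
    (xc : ℝ → Fin nc → ℝ)
    (uc : Fin l → ℝ → ℝ)
    (hcdyn : ∀ t αc, HasDerivAt (fun τ => xc τ αc)
      ((∑ βc : Fin nc, (Jc αc βc - Rc αc βc) * gradC Hc xc βc t)
        + ∑ ξ : Fin l, Gc αc ξ * uc ξ t) t)
    -- the interconnection with a constant matrix `K`
    (K : Fin l → Fin l → ℝ)
    (huc : ∀ ξ t, uc ξ t = ∑ η : Fin l, K ξ η *
      (∫ a in (0:ℝ)..L1, ∫ b in (0:ℝ)..L2,
        ∑ α : Fin n, G α η t a b * varDer2 H x α t a b))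
    (hu : ∀ ξ t, u ξ t = -∑ η : Fin l, K ξ η *
      (∑ βc : Fin nc, Gc βc η * gradC Hc xc βc t))
    -- the Casimir candidate: a smooth second-order density and a controller index
    (lam : Fin nc) (C : Jet2 n → ℝ) (hC : ContDiff ℝ (⊤ : ℕ∞) C)
    -- (a)
    (ha : ∀ βc, Jc lam βc - Rc lam βc = 0)
    -- (b)
    (hb : ∀ t, ∀ a ∈ Set.Icc (0:ℝ) L1, ∀ b ∈ Set.Icc (0:ℝ) L2, ∀ β,
      (∑ α : Fin n, varDer2 C x α t a b * (J α β t a b - R α β t a b))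
        + ∑ ξ : Fin l, ∑ η : Fin l, Gc lam ξ * K ξ η * G β η t a b = 0)
    -- (c)
    (hc : ∀ t, ∀ a ∈ Set.Icc (0:ℝ) L1, ∀ b ∈ Set.Icc (0:ℝ) L2, ∀ αc,
      ∑ α : Fin n, ∑ ξ : Fin l, ∑ η : Fin l,
        varDer2 C x α t a b * G α ξ t a b * K ξ η * Gc αc η = 0)
    -- (d): the boundary contributions of `C` vanish along the solution
    (hd1 : ∀ t, ∀ b ∈ Set.Icc (0:ℝ) L2, edge1 C x t 0 b = 0 ∧ edge1 C x t L1 b = 0)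
    (hd2 : ∀ t, ∀ a ∈ Set.Icc (0:ℝ) L1, edge2 C x t a 0 = 0 ∧ edge2 C x t a L2 = 0)
    (hdc : ∀ t, corner2 C x t 0 0 = 0 ∧ corner2 C x t L1 0 = 0
      ∧ corner2 C x t 0 L2 = 0 ∧ corner2 C x t L1 L2 = 0) :
    ∀ t s : ℝ,
      xc t lam + (∫ a in (0:ℝ)..L1, ∫ b in (0:ℝ)..L2, C (jet2 x t a b))
        = xc s lam + (∫ a in (0:ℝ)..L1, ∫ b in (0:ℝ)..L2, C (jet2 x s a b)) := by
  exact statement5_general hL1.le hL2.le hx (A := fun α β t a b => J α β t a b - R α β t a b)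
    (fun α ξ => IsSmoothField.continuous_slice (hG α ξ))
    (fun β => (IsSmoothField.varDer2 hx hH β).continuous_slice) hdyn
    (Fc := fun αc βc => Jc αc βc - Rc αc βc) (hcdyn · lam) huc hu hC ha hb hc hd1 hd2 hdc
end

section
/- (Casimir conditions, 1-dimensional spatial domain.) Consider the closed loop of the plant $\dot{x}^\alpha = (\mathcal{J}^{\alpha\beta}-\mathcal{R}^{\alpha\beta})\delta_\beta\mathcal{H}[x] + \mathcal{G}^\alpha_\xi u^\xi$, $y_\xi = \mathcal{G}^\alpha_\xi\delta_\alpha\mathcal{H}[x]$ on $[0,L]$ (smooth data, second-order density $\mathcal{H}$) and the finite-dimensional controller $\dot{x}_c^{\alpha_c} = (J_c^{\alpha_c\beta_c}-R_c^{\alpha_c\beta_c})\partial_{\beta_c}H_c(x_c) + G^{\alpha_c}_{c,\xi}u_c^\xi$, $y_{c,\xi} = G^{\beta_c}_{c,\xi}\partial_{\beta_c}H_c(x_c)$, interconnected by $u_c^\xi = K^{\xi\eta}\int_0^L y_\eta\,dz$, $u^\xi = -K^{\xi\eta}y_{c,\eta}$ with a constant matrix $K$. Fix $\lambda\in\{1,\dots,n_c\}$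 and let $\mathcal{C}$ be a smooth second-order density. Assume, for all $t$ and all $z \in [0,L]$: (a) $J_c^{\lambda\beta_c}-R_c^{\lambda\beta_c}=0$ for all $\beta_c$; (b) $\delta_\alpha\mathcal{C}[x]\,(\mathcal{J}^{\alpha\beta}-\mathcal{R}^{\alpha\beta}) + G^\lambda_{c,\xi}K^{\xi\eta}\mathcal{G}^\beta_\eta = 0$ for all $\beta$; (c) $\delta_\alpha\mathcal{C}[x]\,\mathcal{G}^\alpha_\xi K^{\xi\eta}G^{\alpha_c}_{c,\eta} = 0$ for all $\alpha_c$; (d) $\dot{x}^\alpha\,\delta^{\partial,1}_\alpha\mathcal{C}[x] + \dot{x}^\alpha_{[1]}\,\delta^{\partial,2}_\alpha\mathcal{C}[x] = 0$ at $z=0$ and $z=L$. Then $\mathscr{C}(t) = x_c^\lambda(t) + \int_0^L\mathcal{C}[x](t,z)\,dz$ is constant in $t$ along the closed-loop solution. -/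
open MeasureTheory

/-- Time derivative of a field `f(t,z)`. -/
noncomputable def pT {E : Type*} [NormedAddCommGroup E] [NormedSpace ℝ E]
    (f : ℝ → ℝ → E) : ℝ → ℝ → E := fun t z => deriv (fun s => f s z) t

/-- Spatial derivative of a field `f(t,z)`. -/
noncomputable def pZ {E : Type*} [NormedAddCommGroup E] [NormedSpace ℝ E]
    (f : ℝ → ℝ → E) : ℝ → ℝ → E := fun t z => deriv (fun s => f t s) z

/-- Second order jet `(z, x, x_[1], x_[2])` of the field `x`. -/
noncomputable def jet1 {n : ℕ} (x : ℝ → ℝ → Fin n → ℝ) (t z : ℝ) :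
    ℝ × (Fin n → ℝ) × (Fin n → ℝ) × (Fin n → ℝ) :=
  (z, x t z, pZ x t z, pZ (pZ x) t z)

/-- Composed partial derivative `(∂H/∂x^α)[x]`. -/
noncomputable def sX {n : ℕ}
    (H : ℝ × (Fin n → ℝ) × (Fin n → ℝ) × (Fin n → ℝ) → ℝ)
    (x : ℝ → ℝ → Fin n → ℝ) (α : Fin n) : ℝ → ℝ → ℝ :=
  fun t z => fderiv ℝ H (jet1 x t z) (0, Pi.single α 1, 0, 0)

/-- Composed partial derivative `(∂H/∂x_1^α)[x]`. -/
noncomputable def sX1 {n : ℕ}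
    (H : ℝ × (Fin n → ℝ) × (Fin n → ℝ) × (Fin n → ℝ) → ℝ)
    (x : ℝ → ℝ → Fin n → ℝ) (α : Fin n) : ℝ → ℝ → ℝ :=
  fun t z => fderiv ℝ H (jet1 x t z) (0, 0, Pi.single α 1, 0)

/-- Composed partial derivative `(∂H/∂x_2^α)[x]`. -/
noncomputable def sX2 {n : ℕ}
    (H : ℝ × (Fin n → ℝ) × (Fin n → ℝ) × (Fin n → ℝ) → ℝ)
    (x : ℝ → ℝ → Fin n → ℝ) (α : Fin n) : ℝ → ℝ → ℝ :=
  fun t z => fderiv ℝ H (jet1 x t z) (0, 0, 0, Pi.single α 1)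

/-- Variational derivative `δ_α H[x]`. -/
noncomputable def varDer1 {n : ℕ}
    (H : ℝ × (Fin n → ℝ) × (Fin n → ℝ) × (Fin n → ℝ) → ℝ)
    (x : ℝ → ℝ → Fin n → ℝ) (α : Fin n) : ℝ → ℝ → ℝ :=
  fun t z => sX H x α t z - pZ (sX1 H x α) t z + pZ (pZ (sX2 H x α)) t z

/-- First boundary operator `δ^{∂,1}_α H[x]`. -/
noncomputable def bd1 {n : ℕ}
    (H : ℝ × (Fin n → ℝ) × (Fin n → ℝ) × (Fin n → ℝ) → ℝ)
    (x : ℝ → ℝ → Fin n → ℝ) (α : Fin n) : ℝ → ℝ → ℝ :=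
  fun t z => sX1 H x α t z - pZ (sX2 H x α) t z

/-- Second boundary operator `δ^{∂,2}_α H[x]`. -/
noncomputable def bd2 {n : ℕ}
    (H : ℝ × (Fin n → ℝ) × (Fin n → ℝ) × (Fin n → ℝ) → ℝ)
    (x : ℝ → ℝ → Fin n → ℝ) (α : Fin n) : ℝ → ℝ → ℝ :=
  fun t z => sX2 H x α t z

/-!
Since `∂_t` and `∂_z` commute, integrating by parts twice turns the rate of change of `∫ C[x] dz`
into `∫ δ_α C[x] ẋ^α dz` plus a boundary term, which (d) removes. In `δ_α C[x] ẋ^α`, condition (c)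
makes the controller feedback disappear, and (b) trades the plant term for minus the
plant output as seen by the `λ`-th controller state, `-G_c^λ K y`. What remains is `-G_c^λ u_c`,
and by (a) this is exactly opposite to the rate of change of `x_c^λ`.
-/

section Fields

variable {E : Type*} [NormedAddCommGroup E] [NormedSpace ℝ E] {f : ℝ → ℝ → E}

theorem hasDerivAt_pT (hf : Differentiable ℝ (Function.uncurry f)) (t z : ℝ) :
    HasDerivAt (fun s => f s z) (pT f t z) t :=
  (hf.comp (by fun_prop : Differentiable ℝ fun s : ℝ => (s, z))).differentiableAt.hasDerivAt

theorem hasDerivAt_pZ (hf : Differentiable ℝ (Function.uncurry f)) (t z : ℝ) :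
    HasDerivAt (fun s => f t s) (pZ f t z) z :=
  (hf.comp (by fun_prop : Differentiable ℝ fun s : ℝ => (t, s))).differentiableAt.hasDerivAt

theorem uncurry_pT_eq_fderiv (hf : Differentiable ℝ (Function.uncurry f)) :
    Function.uncurry (pT f) = fun q => fderiv ℝ (Function.uncurry f) q (1, 0) := by
  funext ⟨t, z⟩
  exact ((hf (t, z)).hasFDerivAt.comp_hasDerivAt t
    ((hasDerivAt_id t).prodMk (hasDerivAt_const t z))).deriv

theorem uncurry_pZ_eq_fderiv (hf : Differentiable ℝ (Function.uncurry f)) :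
    Function.uncurry (pZ f) = fun q => fderiv ℝ (Function.uncurry f) q (0, 1) := by
  funext ⟨t, z⟩
  exact ((hf (t, z)).hasFDerivAt.comp_hasDerivAt z
    ((hasDerivAt_const z t).prodMk (hasDerivAt_id z))).deriv

theorem contDiff_pT {m k : WithTop ℕ∞} (hf : ContDiff ℝ k (Function.uncurry f))
    (hmk : m + 1 ≤ k) : ContDiff ℝ m (Function.uncurry (pT f)) := by
  rw [uncurry_pT_eq_fderiv ((hf.of_le (le_add_self.trans hmk)).differentiable one_ne_zero)]
  exact (hf.fderiv_right hmk).clm_apply contDiff_const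

theorem contDiff_pZ {m k : WithTop ℕ∞} (hf : ContDiff ℝ k (Function.uncurry f))
    (hmk : m + 1 ≤ k) : ContDiff ℝ m (Function.uncurry (pZ f)) := by
  rw [uncurry_pZ_eq_fderiv ((hf.of_le (le_add_self.trans hmk)).differentiable one_ne_zero)]
  exact (hf.fderiv_right hmk).clm_apply contDiff_const

theorem continuous_pT (hf : ContDiff ℝ 1 (Function.uncurry f)) :
    Continuous (Function.uncurry (pT f)) :=
  (contDiff_pT (m := 0) hf (by norm_num)).continuous

theorem pT_pZ_comm (hf : ContDiff ℝ 2 (Function.uncurry f)) : pT (pZ f) = pZ (pT f) := by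
  have hf_diff : Differentiable ℝ (Function.uncurry f) := hf.differentiable two_ne_zero
  have hDf : Differentiable ℝ (fderiv ℝ (Function.uncurry f)) :=
    (hf.fderiv_right (m := 1) (by norm_num)).differentiable one_ne_zero
  have fderiv_apply (q v w : ℝ × ℝ) :
      fderiv ℝ (fun p => fderiv ℝ (Function.uncurry f) p v) q w =
        fderiv ℝ (fderiv ℝ (Function.uncurry f)) q w v := by
    simp [((hDf q).hasFDerivAt.clm_apply (hasFDerivAt_const v q)).fderiv]
  apply Function.uncurry_injective
  rw [uncurry_pT_eq_fderiv ((contDiff_pZ (m := 1) hf (by norm_num)).differentiable one_ne_zero),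
    uncurry_pZ_eq_fderiv ((contDiff_pT (m := 1) hf (by norm_num)).differentiable one_ne_zero),
    uncurry_pT_eq_fderiv hf_diff, uncurry_pZ_eq_fderiv hf_diff]
  funext q
  rw [fderiv_apply, fderiv_apply]
  exact (hf.contDiffAt.isSymmSndFDerivAt (by simp)).eq _ _

theorem hasDerivAt_pT_right (hf : ContDiff ℝ 2 (Function.uncurry f)) (t z : ℝ) :
    HasDerivAt (pT f t) (pT (pZ f) t z) z := by
  rw [pT_pZ_comm hf]
  exact hasDerivAt_pZ ((contDiff_pT (m := 1) hf (by norm_num)).differentiable one_ne_zero) t z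

theorem hasDerivAt_integral_pT (hf : ContDiff ℝ 1 (Function.uncurry f)) (a b t : ℝ) :
    HasDerivAt (fun s => ∫ z in a..b, f s z) (∫ z in a..b, pT f t z) t := by
  have hf_cont : Continuous (Function.uncurry f) := hf.continuous
  have hpT_cont : Continuous (Function.uncurry (pT f)) := continuous_pT hf
  obtain ⟨M, hM⟩ := ((isCompact_closedBall t 1).prod (isCompact_uIcc (a := a) (b := b))
    ).exists_bound_of_continuousOn hpT_cont.continuousOn
  refine (intervalIntegral.hasDerivAt_integral_of_dominated_loc_of_deriv_le
    (bound := fun _ => M) (Metric.closedBall_mem_nhds t one_pos)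
    (.of_forall fun s => (hf_cont.uncurry_left s).aestronglyMeasurable)
    ((hf_cont.uncurry_left t).intervalIntegrable a b)
    (hpT_cont.uncurry_left t).aestronglyMeasurable
    (.of_forall fun z hz s hs => hM (s, z) ⟨hs, Set.uIoc_subset_uIcc hz⟩)
    intervalIntegrable_const
    (.of_forall fun z _ s _ => hasDerivAt_pT (hf.differentiable one_ne_zero) s z)).2

end Fields

section Jets

theorem map_pi_eq_sum_single {R M ι : Type*} [Semiring R] [AddCommMonoid M] [Module R M]
    [Fintype ι] [DecidableEq ι] (A : (ι → R) →ₗ[R] M) (a : ι → R) :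
    A a = ∑ i, a i • A (Pi.single i 1) := by
  conv_lhs => rw [pi_eq_sum_univ' a]
  simp only [map_sum, map_smul]

theorem map_zero_prodMk_eq_sum_single {R V M ι : Type*} [Semiring R] [AddCommMonoid V] [Module R V]
    [AddCommMonoid M] [Module R M] [Fintype ι] [DecidableEq ι]
    (A : V × (ι → R) × (ι → R) × (ι → R) →ₗ[R] M) (a b c : ι → R) :
    A (0, a, b, c) = ∑ i, (a i • A (0, Pi.single i 1, 0, 0) + b i • A (0, 0, Pi.single i 1, 0) +
      c i • A (0, 0, 0, Pi.single i 1)) := by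
  have split : ((0 : V), a, b, c) = (0, a, 0, 0) + (0, 0, b, 0) + (0, 0, 0, c) := by simp
  rw [split, map_add, map_add, Finset.sum_add_distrib, Finset.sum_add_distrib]
  exact congr_arg₂ _ (congr_arg₂ _
    (map_pi_eq_sum_single (A ∘ₗ .inr R _ _ ∘ₗ .inl R _ _) a)
    (map_pi_eq_sum_single (A ∘ₗ .inr R _ _ ∘ₗ .inr R _ _ ∘ₗ .inl R _ _) b))
    (map_pi_eq_sum_single (A ∘ₗ .inr R _ _ ∘ₗ .inr R _ _ ∘ₗ .inr R _ _) c)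

variable {n : ℕ} {x : ℝ → ℝ → Fin n → ℝ}
  {C : ℝ × (Fin n → ℝ) × (Fin n → ℝ) × (Fin n → ℝ) → ℝ}

theorem contDiff_jet1 {m k : WithTop ℕ∞} (hx : ContDiff ℝ k (Function.uncurry x))
    (hmk : m + 2 ≤ k) : ContDiff ℝ m (Function.uncurry (jet1 x)) := by
  have hm1 : m + 1 + 1 ≤ k := by rwa [add_assoc, one_add_one_eq_two]
  have hxz : ContDiff ℝ (m + 1) (Function.uncurry (pZ x)) := contDiff_pZ hx hm1
  exact contDiff_snd.prodMk ((hx.of_le (le_self_add.trans hmk)).prodMk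
    ((hxz.of_le le_self_add).prodMk (contDiff_pZ hxz le_rfl)))

theorem contDiff_fderiv_jet1_apply {m : WithTop ℕ∞} (hC : ContDiff ℝ (m + 1) C)
    (hx : ContDiff ℝ (m + 2) (Function.uncurry x))
    (v : ℝ × (Fin n → ℝ) × (Fin n → ℝ) × (Fin n → ℝ)) :
    ContDiff ℝ m (Function.uncurry fun t z => fderiv ℝ C (jet1 x t z) v) :=
  ((hC.fderiv_right le_rfl).comp (contDiff_jet1 hx le_rfl)).clm_apply contDiff_const

theorem continuous_varDer1 (hC : ContDiff ℝ 3 C) (hx : ContDiff ℝ 4 (Function.uncurry x))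
    (α : Fin n) : Continuous (Function.uncurry (varDer1 C x α)) := by
  have hpartial (v) : ContDiff ℝ 2 (Function.uncurry fun t z => fderiv ℝ C (jet1 x t z) v) :=
    contDiff_fderiv_jet1_apply (by exact_mod_cast hC) (by exact_mod_cast hx) v
  have hX1 : ContDiff ℝ 1 (Function.uncurry (pZ (sX1 C x α))) :=
    contDiff_pZ (hpartial _) (by norm_num)
  have hX2 : ContDiff ℝ 1 (Function.uncurry (pZ (sX2 C x α))) :=
    contDiff_pZ (hpartial _) (by norm_num)
  exact ((hpartial _).continuous.sub hX1.continuous).add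
    (contDiff_pZ (m := 0) hX2 (by norm_num)).continuous

theorem intervalIntegrable_sum_mul_varDer1 {g : Fin n → ℝ → ℝ → ℝ}
    (hg : ∀ α, Continuous (Function.uncurry (g α))) (hC : ContDiff ℝ 3 C)
    (hx : ContDiff ℝ 4 (Function.uncurry x)) (a b t : ℝ) :
    IntervalIntegrable (fun z => ∑ α, g α t z * varDer1 C x α t z) volume a b :=
  (continuous_finsetSum _ fun α _ => ((hg α).uncurry_left t).mul
    ((continuous_varDer1 hC hx α).uncurry_left t)).intervalIntegrable a b

theorem pT_comp_jet1 (hC : Differentiable ℝ C) (hx : ContDiff ℝ 3 (Function.uncurry x))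
    (t z : ℝ) :
    pT (fun t z => C (jet1 x t z)) t z =
      ∑ α, (pT x t z α * sX C x α t z + pT (pZ x) t z α * sX1 C x α t z +
        pT (pZ (pZ x)) t z α * sX2 C x α t z) := by
  have hxz : ContDiff ℝ 2 (Function.uncurry (pZ x)) := contDiff_pZ hx (by norm_num)
  have hxzz : ContDiff ℝ 1 (Function.uncurry (pZ (pZ x))) := contDiff_pZ hxz (by norm_num)
  have hjet : HasDerivAt (fun s => jet1 x s z)
      (0, pT x t z, pT (pZ x) t z, pT (pZ (pZ x)) t z) t :=
    (hasDerivAt_const t z).prodMk <| (hasDerivAt_pT (hx.differentiable three_ne_zero) t z).prodMk <|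
      (hasDerivAt_pT (hxz.differentiable two_ne_zero) t z).prodMk <|
        hasDerivAt_pT (hxzz.differentiable one_ne_zero) t z
  exact ((hC _).hasFDerivAt.comp_hasDerivAt t hjet).deriv.trans
    (map_zero_prodMk_eq_sum_single (fderiv ℝ C (jet1 x t z)).toLinearMap _ _ _)

/-- The boundary term `ẋ^α δ^{∂,1}_α C[x] + ẋ^α_{[1]} δ^{∂,2}_α C[x]` of the functional
`∫ C[x] dz` at the point `z`: its increment over an interval is the part of the rate of change of
the functional that `∫ δ_α C[x] ẋ^α dz` does not account for. -/
noncomputable def boundaryFlow (C : ℝ × (Fin n → ℝ) × (Fin n → ℝ) × (Fin n → ℝ) → ℝ)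
    (x : ℝ → ℝ → Fin n → ℝ) (t z : ℝ) : ℝ :=
  ∑ α, (pT x t z α * bd1 C x α t z + pT (pZ x) t z α * bd2 C x α t z)

theorem hasDerivAt_boundaryFlow (hC : ContDiff ℝ 3 C) (hx : ContDiff ℝ 4 (Function.uncurry x))
    (t z : ℝ) :
    HasDerivAt (boundaryFlow C x t)
      (pT (fun t z => C (jet1 x t z)) t z - ∑ α, varDer1 C x α t z * pT x t z α) z := by
  have hpartial (v) : ContDiff ℝ 2 (Function.uncurry fun t z => fderiv ℝ C (jet1 x t z) v) :=
    contDiff_fderiv_jet1_apply (by exact_mod_cast hC) (by exact_mod_cast hx) v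
  rw [pT_comp_jet1 (hC.differentiable three_ne_zero) (hx.of_le (by norm_num)),
    ← Finset.sum_sub_distrib]
  refine HasDerivAt.fun_sum fun α _ => ?_
  have hbd2 : HasDerivAt (bd2 C x α t) (pZ (sX2 C x α) t z) z :=
    hasDerivAt_pZ ((hpartial _).differentiable two_ne_zero) t z
  have hbd1 : HasDerivAt (bd1 C x α t) (pZ (sX1 C x α) t z - pZ (pZ (sX2 C x α)) t z) z :=
    (hasDerivAt_pZ ((hpartial _).differentiable two_ne_zero) t z).sub <|
      hasDerivAt_pZ ((contDiff_pZ (m := 1) (hpartial _) (by norm_num)).differentiable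
        one_ne_zero) t z
  have hxt : HasDerivAt (fun z => pT x t z α) (pT (pZ x) t z α) z :=
    hasDerivAt_pi.1 (hasDerivAt_pT_right (hx.of_le (by norm_num)) t z) α
  have hxzt : HasDerivAt (fun z => pT (pZ x) t z α) (pT (pZ (pZ x)) t z α) z :=
    hasDerivAt_pi.1 (hasDerivAt_pT_right (contDiff_pZ hx (by norm_num)) t z) α
  convert! (hxt.mul hbd1).add (hxzt.mul hbd2) using 1
  simp only [varDer1, bd1, bd2]
  ring

theorem integral_pT_comp_jet1 (hC : ContDiff ℝ 3 C) (hx : ContDiff ℝ 4 (Function.uncurry x))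
    (a b t : ℝ) :
    ∫ z in a..b, pT (fun t z => C (jet1 x t z)) t z =
      (∫ z in a..b, ∑ α, varDer1 C x α t z * pT x t z α) +
        (boundaryFlow C x t b - boundaryFlow C x t a) := by
  have hdensity : ContDiff ℝ 1 (Function.uncurry fun t z => C (jet1 x t z)) :=
    (hC.of_le (by norm_num)).comp (contDiff_jet1 hx (by norm_num))
  have hrate : Continuous (pT (fun t z => C (jet1 x t z)) t) :=
    (continuous_pT hdensity).uncurry_left t
  have hxt : Continuous (pT x t) :=
    (continuous_pT (hx.of_le (by norm_num))).uncurry_left t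
  have hprod : Continuous fun z => ∑ α, varDer1 C x α t z * pT x t z α :=
    continuous_finsetSum _ fun α _ =>
      ((continuous_varDer1 hC hx α).uncurry_left t).mul ((continuous_apply α).comp hxt)
  rw [← intervalIntegral.integral_eq_sub_of_hasDerivAt
    (fun z _ => hasDerivAt_boundaryFlow hC hx t z) ((hrate.sub hprod).intervalIntegrable a b),
    intervalIntegral.integral_sub (hrate.intervalIntegrable a b) (hprod.intervalIntegrable a b),
    add_sub_cancel]

theorem hasDerivAt_integral_comp_jet1 (hC : ContDiff ℝ 3 C)
    (hx : ContDiff ℝ 4 (Function.uncurry x)) (a b t : ℝ) :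
    HasDerivAt (fun s => ∫ z in a..b, C (jet1 x s z))
      ((∫ z in a..b, ∑ α, varDer1 C x α t z * pT x t z α) +
        (boundaryFlow C x t b - boundaryFlow C x t a)) t := by
  rw [← integral_pT_comp_jet1 hC hx]
  exact hasDerivAt_integral_pT
    ((hC.of_le (by norm_num)).comp (contDiff_jet1 hx (by norm_num))) a b t

end Jets

section ClosedLoop

open Matrix

theorem integral_const_dotProduct {𝕜 ι : Type*} [RCLike 𝕜] [Fintype ι] {μ : Measure ℝ} {a b : ℝ}
    (c : ι → 𝕜) {y : ℝ → ι → 𝕜} (hy : ∀ i, IntervalIntegrable (fun z => y z i) μ a b) :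
    ∫ z in a..b, c ⬝ᵥ y z ∂μ = c ⬝ᵥ fun i => ∫ z in a..b, y z i ∂μ := by
  simp only [dotProduct, intervalIntegral.integral_finsetSum fun i _ => (hy i).const_mul (c i),
    intervalIntegral.integral_const_mul]

theorem vecMul_vecMul_transpose_apply {S m ι κ : Type*} [NonUnitalSemiring S] [Fintype m]
    [Fintype ι] (p : m → S) (M : Matrix m ι S) (N : Matrix κ ι S) (k : κ) :
    (p ᵥ* M ᵥ* Nᵀ) k = ∑ i, ∑ j, p i * M i j * N k j := by
  change (p ᵥ* M) ⬝ᵥ N k = _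
  rw [← dotProduct_mulVec]
  simp only [dotProduct, mulVec, Finset.mul_sum, mul_assoc]

theorem vecMul_vecMul_vecMul_transpose_apply {S m ι κ τ : Type*} [NonUnitalSemiring S] [Fintype m]
    [Fintype ι] [Fintype τ] (p : m → S) (G : Matrix m ι S) (M : Matrix ι τ S) (N : Matrix κ τ S)
    (k : κ) : (p ᵥ* G ᵥ* M ᵥ* Nᵀ) k = ∑ i, ∑ j, ∑ l, p i * G i j * M j l * N k l := by
  change (p ᵥ* G ᵥ* M) ⬝ᵥ N k = _
  rw [← dotProduct_mulVec, ← dotProduct_mulVec]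
  simp only [dotProduct, mulVec, Finset.mul_sum, mul_assoc]

theorem dotProduct_closedLoop_eq_neg_output {S m ι κ : Type*} [CommRing S] [Fintype m] [Fintype ι]
    [Fintype κ] {A : Matrix m m S} {G : Matrix m ι S} {K : Matrix ι ι S} {Gc : Matrix κ ι S}
    {p : m → S} {g : ι → S} (hb : p ᵥ* A + g ᵥ* K ᵥ* Gᵀ = 0) (hc : p ᵥ* G ᵥ* K ᵥ* Gcᵀ = 0)
    (e : m → S) (ec : κ → S) :
    p ⬝ᵥ (A *ᵥ e + G *ᵥ -(K *ᵥ Gcᵀ *ᵥ ec)) = -(g ⬝ᵥ K *ᵥ Gᵀ *ᵥ e) := by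
  have hplant : p ⬝ᵥ A *ᵥ e = -(g ⬝ᵥ K *ᵥ Gᵀ *ᵥ e) := by
    simp only [dotProduct_mulVec, eq_neg_of_add_eq_zero_left hb, neg_dotProduct]
  have hfeedback : p ⬝ᵥ G *ᵥ K *ᵥ Gcᵀ *ᵥ ec = 0 := by
    simp only [dotProduct_mulVec, hc, zero_dotProduct]
  rw [mulVec_neg, dotProduct_add, dotProduct_neg, hplant, hfeedback, neg_zero, add_zero]

theorem integral_dotProduct_closedLoop {𝕜 m ι κ : Type*} [RCLike 𝕜] [Fintype m] [Fintype ι]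
    [Fintype κ] {μ : Measure ℝ} {a b : ℝ} {A : ℝ → Matrix m m 𝕜} {G : ℝ → Matrix m ι 𝕜}
    {K : Matrix ι ι 𝕜} {Gc : Matrix κ ι 𝕜} {p v e : ℝ → m → 𝕜} {g u : ι → 𝕜} {ec : κ → 𝕜}
    (hv : ∀ z ∈ Set.uIcc a b, v z = A z *ᵥ e z + G z *ᵥ u) (hu : u = -(K *ᵥ Gcᵀ *ᵥ ec))
    (hy : ∀ i, IntervalIntegrable (fun z => ((G z)ᵀ *ᵥ e z) i) μ a b)
    (hb : ∀ z ∈ Set.uIcc a b, p z ᵥ* A z + g ᵥ* K ᵥ* (G z)ᵀ = 0)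
    (hc : ∀ z ∈ Set.uIcc a b, p z ᵥ* G z ᵥ* K ᵥ* Gcᵀ = 0) :
    ∫ z in a..b, p z ⬝ᵥ v z ∂μ = -(g ⬝ᵥ K *ᵥ fun i => ∫ z in a..b, ((G z)ᵀ *ᵥ e z) i ∂μ) := by
  have hpower : Set.EqOn (fun z => p z ⬝ᵥ v z) (fun z => -((g ᵥ* K) ⬝ᵥ (G z)ᵀ *ᵥ e z))
      (Set.uIcc a b) := by
    intro z hz
    simp only [hv z hz, hu, ← dotProduct_mulVec g K]
    exact dotProduct_closedLoop_eq_neg_output (hb z hz) (hc z hz) (e z) ec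
  rw [intervalIntegral.integral_congr hpower, intervalIntegral.integral_neg,
    integral_const_dotProduct _ hy, dotProduct_mulVec]

/-- The efforts `e` and `ec` take the place of `δH[x]` and `∂H_c(x_c)`: being a Casimir is a
property of the interconnection structure, whatever the Hamiltonians are. -/
theorem statement6_general {n : ℕ} {ι κ : Type*} [Fintype ι] [Fintype κ] {L : ℝ} (hL : 0 ≤ L)
    {x : ℝ → ℝ → Fin n → ℝ} (hx : ContDiff ℝ 4 (Function.uncurry x))
    {J R : Fin n → Fin n → ℝ → ℝ → ℝ} {G : Fin n → ι → ℝ → ℝ → ℝ} {e : Fin n → ℝ → ℝ → ℝ}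
    (hy : ∀ t η, IntervalIntegrable (fun z => ∑ α, G α η t z * e α t z) volume 0 L)
    {u : ι → ℝ → ℝ}
    (hdyn : ∀ t, ∀ z ∈ Set.Icc (0 : ℝ) L, ∀ α,
      pT x t z α = (∑ β, (J α β t z - R α β t z) * e β t z) + ∑ ξ, G α ξ t z * u ξ t)
    {Jc Rc : κ → κ → ℝ} {Gc : κ → ι → ℝ} {ec : κ → ℝ → ℝ} {xc : ℝ → κ → ℝ} {uc : ι → ℝ → ℝ}
    {lam : κ}
    (hcdyn : ∀ t, HasDerivAt (fun τ => xc τ lam)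
      ((∑ βc, (Jc lam βc - Rc lam βc) * ec βc t) + ∑ ξ, Gc lam ξ * uc ξ t) t)
    {K : ι → ι → ℝ}
    (huc : ∀ ξ t, uc ξ t = ∑ η, K ξ η * ∫ z in (0 : ℝ)..L, ∑ α, G α η t z * e α t z)
    (hu : ∀ ξ t, u ξ t = -∑ η, K ξ η * ∑ βc, Gc βc η * ec βc t)
    {C : ℝ × (Fin n → ℝ) × (Fin n → ℝ) × (Fin n → ℝ) → ℝ} (hC : ContDiff ℝ 3 C)
    (ha : ∀ βc, Jc lam βc - Rc lam βc = 0)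
    (hb : ∀ t, ∀ z ∈ Set.Icc (0 : ℝ) L, ∀ β,
      (∑ α, varDer1 C x α t z * (J α β t z - R α β t z)) +
        ∑ ξ, ∑ η, Gc lam ξ * K ξ η * G β η t z = 0)
    (hc : ∀ t, ∀ z ∈ Set.Icc (0 : ℝ) L, ∀ αc,
      ∑ α, ∑ ξ, ∑ η, varDer1 C x α t z * G α ξ t z * K ξ η * Gc αc η = 0)
    (hd : ∀ t, boundaryFlow C x t 0 = 0 ∧ boundaryFlow C x t L = 0) (t s : ℝ) :
    xc t lam + (∫ z in (0 : ℝ)..L, C (jet1 x t z)) =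
      xc s lam + ∫ z in (0 : ℝ)..L, C (jet1 x s z) := by
  have hrate (t : ℝ) : HasDerivAt (fun t => xc t lam + ∫ z in (0 : ℝ)..L, C (jet1 x t z)) 0 t := by
    have hproduction : ∫ z in (0 : ℝ)..L, ∑ α, varDer1 C x α t z * pT x t z α =
        -∑ ξ, Gc lam ξ * uc ξ t := by
      simp only [huc]
      refine integral_dotProduct_closedLoop
        (A := fun z => of fun α β => J α β t z - R α β t z) (G := fun z => of fun α ξ => G α ξ t z)
        (fun z hz => funext (hdyn t z (Set.uIcc_of_le hL ▸ hz))) (funext fun ξ => hu ξ t) (hy t)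
        (fun z hz => funext fun β => ?_) (fun z hz => funext fun αc => ?_)
      · exact (congr_arg _ (vecMul_vecMul_transpose_apply _ _ _ β)).trans
          (hb t z (Set.uIcc_of_le hL ▸ hz) β)
      · exact (vecMul_vecMul_vecMul_transpose_apply _ _ _ _ αc).trans
          (hc t z (Set.uIcc_of_le hL ▸ hz) αc)
    have hsum := (hcdyn t).fun_add (hasDerivAt_integral_comp_jet1 hC hx 0 L t)
    simpa only [hproduction, ha, (hd t).1, (hd t).2, zero_mul, Finset.sum_const_zero, zero_add,
      sub_zero, add_zero, add_neg_cancel] using hsum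
  exact is_const_of_deriv_eq_zero (fun t => (hrate t).differentiableAt)
    (fun t => (hrate t).deriv) t s

end ClosedLoop

/-- Casimir conditions, 1-dimensional spatial domain: under the
conditions (a)–(d), the functional `𝒞(t) = x_c^λ(t) + ∫_0^L 𝒞[x] dz` is a
structural invariant of the closed loop. -/
theorem statement6 {n l nc : ℕ} (L : ℝ) (hL : 0 < L)
    (H : ℝ × (Fin n → ℝ) × (Fin n → ℝ) × (Fin n → ℝ) → ℝ) (hH : ContDiff ℝ (⊤ : ℕ∞) H)
    (x : ℝ → ℝ → Fin n → ℝ)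
    (hx : ContDiff ℝ (⊤ : ℕ∞) (fun q : ℝ × ℝ => x q.1 q.2))
    (J R : Fin n → Fin n → ℝ → ℝ → ℝ)
    (G : Fin n → Fin l → ℝ → ℝ → ℝ)
    (hJ : ∀ α β, ContDiff ℝ (⊤ : ℕ∞) (fun q : ℝ × ℝ => J α β q.1 q.2))
    (hR : ∀ α β, ContDiff ℝ (⊤ : ℕ∞) (fun q : ℝ × ℝ => R α β q.1 q.2))
    (hG : ∀ α ξ, ContDiff ℝ (⊤ : ℕ∞) (fun q : ℝ × ℝ => G α ξ q.1 q.2))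
    (u : Fin l → ℝ → ℝ)
    -- the plant dynamics hold on `[0,L]`
    (hdyn : ∀ t, ∀ z ∈ Set.Icc (0:ℝ) L, ∀ α,
      pT x t z α =
        (∑ β : Fin n, (J α β t z - R α β t z) * varDer1 H x β t z)
          + ∑ ξ : Fin l, G α ξ t z * u ξ t)
    -- the finite-dimensional port-Hamiltonian controller
    (Hc : (Fin nc → ℝ) → ℝ) (hHc : ContDiff ℝ (⊤ : ℕ∞) Hc)
    (Jc Rc : Fin nc → Fin nc → ℝ) (Gc : Fin nc → Fin l → ℝ)
    (xc : ℝ → Fin nc → ℝ)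
    (uc : Fin l → ℝ → ℝ)
    (hcdyn : ∀ t αc, HasDerivAt (fun τ => xc τ αc)
      ((∑ βc : Fin nc, (Jc αc βc - Rc αc βc) * gradC Hc xc βc t)
        + ∑ ξ : Fin l, Gc αc ξ * uc ξ t) t)
    -- the interconnection with a constant matrix `K`
    (K : Fin l → Fin l → ℝ)
    (huc : ∀ ξ t, uc ξ t = ∑ η : Fin l, K ξ η *
      (∫ z in (0:ℝ)..L, ∑ α : Fin n, G α η t z * varDer1 H x α t z))
    (hu : ∀ ξ t, u ξ t = -∑ η : Fin l, K ξ η *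
      (∑ βc : Fin nc, Gc βc η * gradC Hc xc βc t))
    -- the Casimir candidate: a smooth second-order density and a controller index
    (lam : Fin nc) (C : ℝ × (Fin n → ℝ) × (Fin n → ℝ) × (Fin n → ℝ) → ℝ)
    (hC : ContDiff ℝ (⊤ : ℕ∞) C)
    -- (a)
    (ha : ∀ βc, Jc lam βc - Rc lam βc = 0)
    -- (b)
    (hb : ∀ t, ∀ z ∈ Set.Icc (0:ℝ) L, ∀ β,
      (∑ α : Fin n, varDer1 C x α t z * (J α β t z - R α β t z))
        + ∑ ξ : Fin l, ∑ η : Fin l, Gc lam ξ * K ξ η * G β η t z = 0)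
    -- (c)
    (hc : ∀ t, ∀ z ∈ Set.Icc (0:ℝ) L, ∀ αc,
      ∑ α : Fin n, ∑ ξ : Fin l, ∑ η : Fin l,
        varDer1 C x α t z * G α ξ t z * K ξ η * Gc αc η = 0)
    -- (d): the boundary contributions of `C` vanish at `z = 0` and `z = L`
    (hd : ∀ t,
      (∑ α : Fin n, (pT x t 0 α * bd1 C x α t 0 + pT (pZ x) t 0 α * bd2 C x α t 0)) = 0
      ∧ (∑ α : Fin n, (pT x t L α * bd1 C x α t L + pT (pZ x) t L α * bd2 C x α t L)) = 0) :
    ∀ t s : ℝ,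
      xc t lam + (∫ z in (0:ℝ)..L, C (jet1 x t z))
        = xc s lam + (∫ z in (0:ℝ)..L, C (jet1 x s z)) := by
  have hx4 : ContDiff ℝ 4 (Function.uncurry x) := contDiff_infty.1 hx 4
  exact statement6_general hL.le hx4 (fun t η => intervalIntegrable_sum_mul_varDer1
    (fun α => (hG α η).continuous) (contDiff_infty.1 hH 3) hx4 0 L t)
    hdyn (hcdyn · lam) huc hu (contDiff_infty.1 hC 3) ha hb hc hd
end

section
/- Let $\Xi > 0$ and $\nu\in\mathbb{R}$ be constants and consider the plate density $\mathcal{H} = \frac{p^2}{2\mu} + \frac{\Xi}{2}\big(w_{[20]}^2 + w_{[02]}^2 + 2\nu w_{[20]}w_{[02]} + 2(1-\nu)w_{[11]}^2\big)$ with constant $\mu>0$. Then for any smooth $w:\mathbb{R}\times B\to\mathbb{R}$, on an edge with normal direction $z^2$ the composed boundary operators of $\mathcal{H}$ with respect to $w$ evaluate to $\delta^{\partial,2}_w\mathcal{H}[w] = \partial^{[02]}_w\mathcal{H}[w] = \Xi\,(\nu w_{[20]} + w_{[02]})$ and $\delta^{\partial,1}_w\mathcal{H}[w] = \partial^{[01]}_w\mathcal{H}[w]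 - \partial_1\big(\partial^{[11]}_w\mathcal{H}[w]\big) - \partial_2\big(\partial^{[02]}_w\mathcal{H}[w]\big) = -\Xi\,\big(w_{[03]} + (2-\nu)\,w_{[21]}\big)$; i.e., up to the factor $\Xi$, the boundary operators reproduce the negative bending moment $M_1 = -w_{[02]}-\nu w_{[20]}$ (as $\delta^{\partial,2}_w\mathcal{H} = -\Xi M_1$) and the negative effective shear force $Q_1 = w_{[03]}+(2-\nu)w_{[21]}$ (as $\delta^{\partial,1}_w\mathcal{H} = -\Xi Q_1$) of the Kirchhoff–Love plate. -/
open MeasureTheory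

/-- Jet coordinates `(z¹, z², w, p, w_[10], w_[01], w_[20], w_[11], w_[02])`
for the two scalar fields `w` (deflection) and `p` (momentum) of the plate. -/
abbrev PlateJet := ℝ × ℝ × ℝ × ℝ × ℝ × ℝ × ℝ × ℝ × ℝ

/-- The Kirchhoff–Love plate density
`𝓗 = p²/(2μ) + Ξ/2 (w_[20]² + w_[02]² + 2ν w_[20] w_[02] + 2(1-ν) w_[11]²)`. -/
noncomputable def plateH (μ Ξ : ℝ → ℝ → ℝ) (ν : ℝ) : PlateJet → ℝ :=
  fun q =>
    match q with
    | (z1, z2, _w, p, _w10, _w01, w20, w11, w02) =>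
      p ^ 2 / (2 * μ z1 z2)
        + Ξ z1 z2 / 2 * (w20 ^ 2 + w02 ^ 2 + 2 * ν * w20 * w02 + 2 * (1 - ν) * w11 ^ 2)

/-- Second-order jet of the fields `(w, p)` at `(t, z¹, z²)`. -/
noncomputable def jetWP (w p : ℝ → ℝ → ℝ → ℝ) (t a b : ℝ) : PlateJet :=
  (a, b, w t a b, p t a b, dz1 w t a b, dz2 w t a b,
    dz1 (dz1 w) t a b, dz1 (dz2 w) t a b, dz2 (dz2 w) t a b)

/-- Composed partial derivative of a plate density with respect to one of the jet slots,
selected by the direction `e`. -/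
noncomputable def slotP (H : PlateJet → ℝ) (w p : ℝ → ℝ → ℝ → ℝ) (e : PlateJet) :
    ℝ → ℝ → ℝ → ℝ :=
  fun t a b => fderiv ℝ H (jetWP w p t a b) e


/-- First boundary operator `δ^{∂,1}_w H[w]` on an edge with normal direction `z²`:
`∂^[01]_w H[w] - ∂₁(∂^[11]_w H[w]) - ∂₂(∂^[02]_w H[w])`. -/
noncomputable def bdW1 (H : PlateJet → ℝ) (w p : ℝ → ℝ → ℝ → ℝ) : ℝ → ℝ → ℝ → ℝ :=
  fun t a b =>
    slotP H w p (0, 0, 0, 0, 0, 1, 0, 0, 0) t a b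
      - dz1 (slotP H w p (0, 0, 0, 0, 0, 0, 0, 1, 0)) t a b
      - dz2 (slotP H w p (0, 0, 0, 0, 0, 0, 0, 0, 1)) t a b

/-- Second boundary operator `δ^{∂,2}_w H[w] = ∂^[02]_w H[w]`
on an edge with normal direction `z²`. -/
noncomputable def bdW2 (H : PlateJet → ℝ) (w p : ℝ → ℝ → ℝ → ℝ) : ℝ → ℝ → ℝ → ℝ :=
  fun t a b => slotP H w p (0, 0, 0, 0, 0, 0, 0, 0, 1) t a b

/-!
The density is a quadratic polynomial in the derivatives of `w`, so its slot derivatives can be read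
off its first variation: `∂^[01] = 0`, `∂^[11] = 2(1-ν) Ξ w_[11]` and `∂^[02] = -Ξ M₁`. The shear
force then comes from `∂₂ M₁ = -w_[03] - ν w_[21]`, where symmetry of second derivatives turns
`∂₂ ∂₁ ∂₁ w` into `w_[21]`. For variable coefficients the product rule adds terms in `∂₁ Ξ` and
`∂₂ Ξ`.
-/

section Fields

variable {E : Type*} [NormedAddCommGroup E] [NormedSpace ℝ E] {f : ℝ → ℝ → ℝ → E} {t a b : ℝ}

theorem hasDerivAt_z1_of_differentiableAt (hf : DifferentiableAt ℝ ↿f (t, a, b)) :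
    HasDerivAt (fun s => f t s b) (fderiv ℝ ↿f (t, a, b) (0, 1, 0)) a := by
  have hline : HasDerivAt (fun s => (t, s, b)) (0, 1, 0) a :=
    (hasDerivAt_const a t).prodMk ((hasDerivAt_id a).prodMk (hasDerivAt_const a b))
  exact HasFDerivAt.comp_hasDerivAt a hf.hasFDerivAt hline

theorem hasDerivAt_z2_of_differentiableAt (hf : DifferentiableAt ℝ ↿f (t, a, b)) :
    HasDerivAt (fun s => f t a s) (fderiv ℝ ↿f (t, a, b) (0, 0, 1)) b := by
  have hline : HasDerivAt (fun s => (t, a, s)) (0, 0, 1) b :=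
    (hasDerivAt_const b t).prodMk ((hasDerivAt_const b a).prodMk (hasDerivAt_id b))
  exact HasFDerivAt.comp_hasDerivAt b hf.hasFDerivAt hline

theorem hasDerivAt_dz1 (hf : DifferentiableAt ℝ ↿f (t, a, b)) :
    HasDerivAt (fun s => f t s b) (dz1 f t a b) a :=
  (hasDerivAt_z1_of_differentiableAt hf).differentiableAt.hasDerivAt

theorem hasDerivAt_dz2 (hf : DifferentiableAt ℝ ↿f (t, a, b)) :
    HasDerivAt (fun s => f t a s) (dz2 f t a b) b :=
  (hasDerivAt_z2_of_differentiableAt hf).differentiableAt.hasDerivAt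

theorem uncurry_dz1 (hf : Differentiable ℝ ↿f) :
    ↿(dz1 f) = fun x => fderiv ℝ ↿f x (0, 1, 0) :=
  funext fun x => (hasDerivAt_z1_of_differentiableAt (hf x)).deriv

theorem uncurry_dz2 (hf : Differentiable ℝ ↿f) :
    ↿(dz2 f) = fun x => fderiv ℝ ↿f x (0, 0, 1) :=
  funext fun x => (hasDerivAt_z2_of_differentiableAt (hf x)).deriv

theorem contDiff_dz1 {n : WithTop ℕ∞} (hf : ContDiff ℝ (n + 1) ↿f) : ContDiff ℝ n ↿(dz1 f) := by
  rw [uncurry_dz1 (hf.differentiable (by simp))]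
  exact (hf.fderiv_right le_rfl).clm_apply contDiff_const

theorem contDiff_dz2 {n : WithTop ℕ∞} (hf : ContDiff ℝ (n + 1) ↿f) : ContDiff ℝ n ↿(dz2 f) := by
  rw [uncurry_dz2 (hf.differentiable (by simp))]
  exact (hf.fderiv_right le_rfl).clm_apply contDiff_const

theorem dz2_dz1_comm (hf : ContDiff ℝ 2 ↿f) : dz2 (dz1 f) = dz1 (dz2 f) := by
  funext t a b
  have hf₁ : Differentiable ℝ ↿f := hf.differentiable two_ne_zero
  have hf₂ : DifferentiableAt ℝ (fderiv ℝ ↿f) (t, a, b) :=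
    (hf.fderiv_right (m := 1) one_add_one_eq_two.le).differentiable one_ne_zero _
  have hsymm : IsSymmSndFDerivAt ℝ ↿f (t, a, b) := hf.contDiffAt.isSymmSndFDerivAt (by simp)
  have hsnd (u v : ℝ × ℝ × ℝ) : fderiv ℝ (fun x => fderiv ℝ ↿f x u) (t, a, b) v =
      fderiv ℝ (fderiv ℝ ↿f) (t, a, b) v u := by
    simp [fderiv_clm_apply hf₂ (differentiableAt_const u)]
  calc
    dz2 (dz1 f) t a b = fderiv ℝ ↿(dz1 f) (t, a, b) (0, 0, 1) :=
      (hasDerivAt_z2_of_differentiableAt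
        ((contDiff_dz1 (n := 1) hf).differentiable one_ne_zero _)).deriv
    _ = fderiv ℝ (fderiv ℝ ↿f) (t, a, b) (0, 0, 1) (0, 1, 0) := by rw [uncurry_dz1 hf₁, hsnd]
    _ = fderiv ℝ (fderiv ℝ ↿f) (t, a, b) (0, 1, 0) (0, 0, 1) := hsymm _ _
    _ = fderiv ℝ ↿(dz2 f) (t, a, b) (0, 1, 0) := by rw [uncurry_dz2 hf₁, hsnd]
    _ = dz1 (dz2 f) t a b :=
      (hasDerivAt_z1_of_differentiableAt
        ((contDiff_dz2 (n := 1) hf).differentiable one_ne_zero _)).deriv.symm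

end Fields

section Plate

/-- The bending moment `M₁ = -w_[02] - ν w_[20]` on an edge with normal direction `z²`, normalised
so that the factor `Ξ` is left out. -/
noncomputable def bendingMoment (ν : ℝ) (w : ℝ → ℝ → ℝ → ℝ) : ℝ → ℝ → ℝ → ℝ :=
  fun t a b => -dz2 (dz2 w) t a b - ν * dz1 (dz1 w) t a b

/-- The effective shear force `Q₁ = w_[03] + (2-ν) w_[21]` on an edge with normal direction `z²`,
normalised so that the factor `Ξ` is left out. -/
noncomputable def effectiveShearForce (ν : ℝ) (w : ℝ → ℝ → ℝ → ℝ) : ℝ → ℝ → ℝ → ℝ :=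
  fun t a b => dz2 (dz2 (dz2 w)) t a b + (2 - ν) * dz1 (dz1 (dz2 w)) t a b

variable {μ Ξ : ℝ → ℝ → ℝ} {w : ℝ → ℝ → ℝ → ℝ}

theorem contDiff_bendingMoment (ν : ℝ) {n : WithTop ℕ∞} (hw : ContDiff ℝ (n + 1 + 1) ↿w) :
    ContDiff ℝ n ↿(bendingMoment ν w) :=
  (contDiff_dz2 (contDiff_dz2 hw)).neg.sub (contDiff_const.mul (contDiff_dz1 (contDiff_dz1 hw)))

theorem dz2_bendingMoment (ν : ℝ) (hw : ContDiff ℝ 3 ↿w) (t a b : ℝ) :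
    dz2 (bendingMoment ν w) t a b =
      -dz2 (dz2 (dz2 w)) t a b - ν * dz1 (dz1 (dz2 w)) t a b := by
  have hw₃ : ContDiff ℝ (1 + 1 + 1) ↿w := hw.of_le (by norm_num)
  have hw₀₂ := (contDiff_dz2 (contDiff_dz2 hw₃)).differentiable one_ne_zero (t, a, b)
  have hw₂₀ := (contDiff_dz1 (contDiff_dz1 hw₃)).differentiable one_ne_zero (t, a, b)
  have hcomm : dz2 (dz1 (dz1 w)) = dz1 (dz1 (dz2 w)) := by
    rw [dz2_dz1_comm (contDiff_dz1 (n := 2) (hw.of_le (by norm_num))),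
      dz2_dz1_comm (hw.of_le (by norm_num))]
  rw [← hcomm]
  exact ((hasDerivAt_dz2 hw₀₂).neg.sub ((hasDerivAt_dz2 hw₂₀).const_mul ν)).deriv

theorem differentiable_plateH (hμ : Differentiable ℝ ↿μ) (hμ₀ : ∀ a b, μ a b ≠ 0)
    (hΞ : Differentiable ℝ ↿Ξ) (ν : ℝ) : Differentiable ℝ (plateH μ Ξ ν) := by
  have hposition : Differentiable ℝ fun q : PlateJet => (q.1, q.2.1) := by fun_prop
  have hμ' : Differentiable ℝ fun q : PlateJet => μ q.1 q.2.1 := hμ.comp hposition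
  have hΞ' : Differentiable ℝ fun q : PlateJet => Ξ q.1 q.2.1 := hΞ.comp hposition
  have hkinetic : Differentiable ℝ fun q : PlateJet => q.2.2.2.1 ^ 2 / (2 * μ q.1 q.2.1) := by
    have hinv : Differentiable ℝ fun q : PlateJet => (2 * μ q.1 q.2.1)⁻¹ :=
      (hμ'.const_mul 2).inv fun q => mul_ne_zero two_ne_zero (hμ₀ q.1 q.2.1)
    simp only [div_eq_mul_inv]
    fun_prop
  have hbending : Differentiable ℝ fun q : PlateJet => Ξ q.1 q.2.1 / 2 *
      (q.2.2.2.2.2.2.1 ^ 2 + q.2.2.2.2.2.2.2.2 ^ 2 +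
        2 * ν * q.2.2.2.2.2.2.1 * q.2.2.2.2.2.2.2.2 + 2 * (1 - ν) * q.2.2.2.2.2.2.2.1 ^ 2) := by
    simp only [div_eq_mul_inv]
    exact (hΞ'.mul_const 2⁻¹).mul (by fun_prop)
  exact hkinetic.add hbending

theorem hasLineDerivAt_plateH (μ Ξ : ℝ → ℝ → ℝ)
    (ν a b w p w₁₀ w₀₁ w₂₀ w₁₁ w₀₂ δw δw₁₀ δw₀₁ δw₂₀ δw₁₁ δw₀₂ : ℝ) :
    HasLineDerivAt ℝ (plateH μ Ξ ν)
      (Ξ a b * ((w₂₀ + ν * w₀₂) * δw₂₀ + (w₀₂ + ν * w₂₀) * δw₀₂ + 2 * (1 - ν) * w₁₁ * δw₁₁))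
      (a, b, w, p, w₁₀, w₀₁, w₂₀, w₁₁, w₀₂) (0, 0, δw, 0, δw₁₀, δw₀₁, δw₂₀, δw₁₁, δw₀₂) := by
  have hline (u δu : ℝ) : HasDerivAt (fun s => u + s * δu) δu 0 := by
    simpa using ((hasDerivAt_id (0 : ℝ)).mul_const δu).const_add u
  have h₂₀ := hline w₂₀ δw₂₀
  have h₁₁ := hline w₁₁ δw₁₁
  have h₀₂ := hline w₀₂ δw₀₂
  have hbending := ((((h₂₀.pow 2).add (h₀₂.pow 2)).add ((h₂₀.const_mul (2 * ν)).mul h₀₂)).add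
    ((h₁₁.pow 2).const_mul (2 * (1 - ν)))).const_mul (Ξ a b / 2)
  unfold HasLineDerivAt
  convert hbending.const_add (p ^ 2 / (2 * μ a b)) using 1
  · funext s
    simp [plateH]
  · simp only [Nat.cast_ofNat, zero_mul, add_zero, Nat.add_one_sub_one, pow_one]
    ring

theorem slotP_plateH (hμ : Differentiable ℝ ↿μ) (hμ₀ : ∀ a b, μ a b ≠ 0)
    (hΞ : Differentiable ℝ ↿Ξ) (ν : ℝ) (w p : ℝ → ℝ → ℝ → ℝ)
    (δw δw₁₀ δw₀₁ δw₂₀ δw₁₁ δw₀₂ t a b : ℝ) :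
    slotP (plateH μ Ξ ν) w p (0, 0, δw, 0, δw₁₀, δw₀₁, δw₂₀, δw₁₁, δw₀₂) t a b =
      Ξ a b * ((dz1 (dz1 w) t a b + ν * dz2 (dz2 w) t a b) * δw₂₀ +
        (dz2 (dz2 w) t a b + ν * dz1 (dz1 w) t a b) * δw₀₂ +
        2 * (1 - ν) * dz1 (dz2 w) t a b * δw₁₁) :=
  ((differentiable_plateH hμ hμ₀ hΞ ν _).hasFDerivAt.hasLineDerivAt _).unique
    (hasLineDerivAt_plateH ..)

theorem slotP_plateH_w01 (hμ : Differentiable ℝ ↿μ) (hμ₀ : ∀ a b, μ a b ≠ 0)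
    (hΞ : Differentiable ℝ ↿Ξ) (ν : ℝ) (w p : ℝ → ℝ → ℝ → ℝ) (t a b : ℝ) :
    slotP (plateH μ Ξ ν) w p (0, 0, 0, 0, 0, 1, 0, 0, 0) t a b = 0 := by
  simp [slotP_plateH hμ hμ₀ hΞ]

theorem slotP_plateH_w11 (hμ : Differentiable ℝ ↿μ) (hμ₀ : ∀ a b, μ a b ≠ 0)
    (hΞ : Differentiable ℝ ↿Ξ) (ν : ℝ) (w p : ℝ → ℝ → ℝ → ℝ) :
    slotP (plateH μ Ξ ν) w p (0, 0, 0, 0, 0, 0, 0, 1, 0) =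
      fun t a b => Ξ a b * (2 * (1 - ν) * dz1 (dz2 w) t a b) := by
  funext t a b
  simp [slotP_plateH hμ hμ₀ hΞ]

theorem slotP_plateH_w02 (hμ : Differentiable ℝ ↿μ) (hμ₀ : ∀ a b, μ a b ≠ 0)
    (hΞ : Differentiable ℝ ↿Ξ) (ν : ℝ) (w p : ℝ → ℝ → ℝ → ℝ) :
    slotP (plateH μ Ξ ν) w p (0, 0, 0, 0, 0, 0, 0, 0, 1) =
      fun t a b => -(Ξ a b * bendingMoment ν w t a b) := by
  funext t a b
  rw [slotP_plateH hμ hμ₀ hΞ, bendingMoment]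
  ring

theorem dz1_slotP_plateH_w11 (hμ : Differentiable ℝ ↿μ) (hμ₀ : ∀ a b, μ a b ≠ 0)
    (hΞ : Differentiable ℝ ↿Ξ) (ν : ℝ) (p : ℝ → ℝ → ℝ → ℝ)
    (hw : ContDiff ℝ 3 ↿w) (t a b : ℝ) :
    dz1 (slotP (plateH μ Ξ ν) w p (0, 0, 0, 0, 0, 0, 0, 1, 0)) t a b =
      dz1 (fun _ => Ξ) t a b * (2 * (1 - ν) * dz1 (dz2 w) t a b) +
        Ξ a b * (2 * (1 - ν) * dz1 (dz1 (dz2 w)) t a b) := by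
  have hΞt : DifferentiableAt ℝ ↿(fun _ : ℝ => Ξ) (t, a, b) := hΞ.comp differentiable_snd _
  have hw₃ : ContDiff ℝ (1 + 1 + 1) ↿w := hw.of_le (by norm_num)
  have hw₁₁ := (contDiff_dz1 (contDiff_dz2 hw₃)).differentiable one_ne_zero (t, a, b)
  rw [slotP_plateH_w11 hμ hμ₀ hΞ]
  exact ((hasDerivAt_dz1 hΞt).mul ((hasDerivAt_dz1 hw₁₁).const_mul _)).deriv

theorem dz2_slotP_plateH_w02 (hμ : Differentiable ℝ ↿μ) (hμ₀ : ∀ a b, μ a b ≠ 0)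
    (hΞ : Differentiable ℝ ↿Ξ) (ν : ℝ) (p : ℝ → ℝ → ℝ → ℝ)
    (hw : ContDiff ℝ 3 ↿w) (t a b : ℝ) :
    dz2 (slotP (plateH μ Ξ ν) w p (0, 0, 0, 0, 0, 0, 0, 0, 1)) t a b =
      -(dz2 (fun _ => Ξ) t a b * bendingMoment ν w t a b +
        Ξ a b * dz2 (bendingMoment ν w) t a b) := by
  have hΞt : DifferentiableAt ℝ ↿(fun _ : ℝ => Ξ) (t, a, b) := hΞ.comp differentiable_snd _
  have hM := (contDiff_bendingMoment ν (n := 1) (hw.of_le (by norm_num))).differentiable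
    one_ne_zero (t, a, b)
  rw [slotP_plateH_w02 hμ hμ₀ hΞ]
  exact ((hasDerivAt_dz2 hΞt).mul (hasDerivAt_dz2 hM)).neg.deriv

theorem statement8_general (hμ : Differentiable ℝ ↿μ) (hμ₀ : ∀ a b, μ a b ≠ 0)
    (hΞ : Differentiable ℝ ↿Ξ) (ν : ℝ) (p : ℝ → ℝ → ℝ → ℝ)
    (hw : ContDiff ℝ 3 ↿w) (t a b : ℝ) :
    bdW2 (plateH μ Ξ ν) w p t a b = -Ξ a b * bendingMoment ν w t a b ∧
      bdW1 (plateH μ Ξ ν) w p t a b =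
        -Ξ a b * effectiveShearForce ν w t a b
          - 2 * (1 - ν) * dz1 (fun _ => Ξ) t a b * dz1 (dz2 w) t a b
          + dz2 (fun _ => Ξ) t a b * bendingMoment ν w t a b := by
  constructor
  · rw [bdW2, slotP_plateH_w02 hμ hμ₀ hΞ, neg_mul]
  · rw [bdW1, slotP_plateH_w01 hμ hμ₀ hΞ, dz1_slotP_plateH_w11 hμ hμ₀ hΞ ν p hw,
      dz2_slotP_plateH_w02 hμ hμ₀ hΞ ν p hw, dz2_bendingMoment ν hw, effectiveShearForce]
    ring

end Plate

/-- on an edge with normal direction `z²`, the boundary operators of the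
constant-coefficient Kirchhoff–Love plate density reproduce (up to the factor `Ξ`) the
negative bending moment `M₁ = -w_[02] - ν w_[20]` and the negative effective shear force
`Q₁ = w_[03] + (2-ν) w_[21]`. -/
theorem statement8 (L1 L2 : ℝ) (hL1 : 0 < L1) (hL2 : 0 < L2)
    (μ Ξ ν : ℝ) (hμ : 0 < μ) (hΞ : 0 < Ξ)
    (w p : ℝ → ℝ → ℝ → ℝ)
    (hw : ContDiff ℝ (⊤ : ℕ∞) (fun q : ℝ × ℝ × ℝ => w q.1 q.2.1 q.2.2)) :
    ∀ t : ℝ, ∀ a ∈ Set.Icc (0:ℝ) L1, ∀ b ∈ ({0, L2} : Set ℝ),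
      (bdW2 (plateH (fun _ _ => μ) (fun _ _ => Ξ) ν) w p t a b =
          Ξ * (ν * dz1 (dz1 w) t a b + dz2 (dz2 w) t a b)
        ∧ bdW2 (plateH (fun _ _ => μ) (fun _ _ => Ξ) ν) w p t a b =
            -Ξ * (-dz2 (dz2 w) t a b - ν * dz1 (dz1 w) t a b))
      ∧
      (bdW1 (plateH (fun _ _ => μ) (fun _ _ => Ξ) ν) w p t a b =
          -Ξ * (dz2 (dz2 (dz2 w)) t a b + (2 - ν) * dz1 (dz1 (dz2 w)) t a b)
        ∧ bdW1 (plateH (fun _ _ => μ) (fun _ _ => Ξ) ν) w p t a b =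
            -Ξ * (dz2 (dz2 (dz2 w)) t a b + (2 - ν) * dz1 (dz1 (dz2 w)) t a b)) := by
  intro t a _ b _
  obtain ⟨hM, hQ⟩ := statement8_general (μ := fun _ _ => μ) (Ξ := fun _ _ => Ξ)
    (differentiable_const μ) (fun _ _ => hμ.ne') (differentiable_const Ξ) ν p
    (hw.of_le (WithTop.coe_le_coe.2 le_top)) t a b
  simp only [dz1, dz2, deriv_const, mul_zero, zero_mul, sub_zero, add_zero] at hQ
  exact ⟨⟨hM.trans (by rw [bendingMoment]; ring), hM⟩, hQ, hQ⟩
end
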